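/- arXiv:1408.4252 — 2 statements merged into one kernel-verified Lean document; each statement's English description precedes it below -/
import Mathlib

section
/- For every integer d ≥ 1 and all θ > 0, χ′ > 0 there exists η > 0 with the following property. Let Q be a compact subset of the closed unit ball of ℝ^d that is homeomorphic to the closed unit ball of ℝ^d and has diameter equal to 1, and let f : B(0,2) → ℝ^d be a C^∞ map that is a diffeomorphism onto its image, preserves Lebesgue measure, and satisfies ‖Df(x) − Id‖ < η and ‖D²f(x)‖ ≤ η for all x ∈ B(0,2). Then there exist b ∈ ℝ^d and a C^∞ map g : B(0,2) → ℝ^d that is a diffeomorphism onto its image and preserves Lebesgue measure, such that: g(x) = f(x) for every x ∈ B(0,2) whose distance to Q is at least χ′; g(z) = z + b for every z ∈ Q; and ‖Dg(x) − Df(x)‖ ≤ θ for all x ∈ B(0,2). -/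
open Metric MeasureTheory

/-!
Up to a translation, `f` is `x ↦ x + v x` near the unit ball, with `v` small in `C²`, and this
volume-preserving map has to be interpolated, with volume preservation, between the identity near
`Q` and itself away from `Q`. Multiplying `v` by a cutoff destroys volume preservation; instead
`id + v` is decomposed into maps moving two coordinates each, which are given by generating
functions, and the generating functions are cut off.

A function `S` with small second derivatives defines the map
`u + ∂ⱼS(u) eᵢ ↦ u + ∂ᵢS(u) eⱼ`, whose Jacobian is `1` because both sides have Jacobian
`1 + ∂ᵢ∂ⱼS` as functions of `u`. For the decomposition, take as mixed coordinates of `x` the first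
`k` coordinates of `x + v x` and the other coordinates of `x`. Solving an ordinary differential
equation in the `i`-th variable (`correction`) gives a volume-preserving map `intermediateMap b v i`
which agrees with the mixed coordinates except in the `i`-th one; the first of these maps is the
identity and the last is `id + v`. For consecutive `i, j`, passing from one to the next moves only
the coordinates `i, j`, and volume preservation becomes the closedness of the form
`correction b v j duᵢ + succCorrection b v i duⱼ` in these two variables, so it has a potential
`S`. The second derivatives of `ρ S` are bounded in terms of `S`, `∂ᵢS`, `∂ⱼS` and their first
derivatives only, hence by the `C²` norm of `v`.

The cutoffs `ρ` are chosen among finitely many functions, attached to the subsets of a finite net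
of the unit ball, so that the constants do not depend on `Q`. The resulting map agrees with `f` on
an annulus outside the unit ball, and `f` is used beyond it.
-/

namespace LocalLinearization

open scoped ContDiff Topology RealInnerProductSpace NNReal
open Set Filter

section ParametricIntegral

variable {V F : Type*} [NormedAddCommGroup V] [NormedSpace ℝ V]
  [NormedAddCommGroup F] [NormedSpace ℝ F] {w : ℝ × V → F}

lemma hasFDerivAt_integral_param [ProperSpace V] (hw : ContDiff ℝ 1 w) (u : V) :
    HasFDerivAt (fun u => ∫ t in (0 : ℝ)..1, w (t, u))
      (∫ t in (0 : ℝ)..1, (fderiv ℝ w (t, u)).comp (ContinuousLinearMap.inr ℝ ℝ V)) u := by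
  have hcont : Continuous w := hw.continuous
  have hdiff : Differentiable ℝ w := hw.differentiable one_ne_zero
  have hcont' : Continuous fun p : ℝ × V =>
      (fderiv ℝ w p).comp (ContinuousLinearMap.inr ℝ ℝ V) := by
    have := hw.continuous_fderiv one_ne_zero
    fun_prop
  obtain ⟨C, hC⟩ := (isCompact_Icc (a := (0 : ℝ)) (b := 1)).prod
    (isCompact_closedBall u 1) |>.exists_bound_of_continuousOn hcont'.continuousOn
  refine intervalIntegral.hasFDerivAt_integral_of_dominated_of_fderiv_le
    (F' := fun u t => (fderiv ℝ w (t, u)).comp (ContinuousLinearMap.inr ℝ ℝ V))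
    (bound := fun _ => C) (closedBall_mem_nhds u one_pos)
    (.of_forall fun x => (by fun_prop : Continuous fun t => w (t, x)).aestronglyMeasurable)
    ((by fun_prop : Continuous fun t => w (t, u)).intervalIntegrable _ _)
    (hcont'.comp (by fun_prop : Continuous fun t : ℝ => (t, u))).aestronglyMeasurable
    (.of_forall fun t ht x hx => hC (t, x) ⟨?_, hx⟩) intervalIntegrable_const
    (.of_forall fun t _ x _ => (hdiff (t, x)).hasFDerivAt.comp x (hasFDerivAt_prodMk_right t x))
  rw [uIoc_of_le zero_le_one] at ht
  exact ⟨ht.1.le, ht.2⟩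

-- The integral is a convolution with the indicator of `(0, 1]`, evaluated at `0`.
lemma contDiff_integral_param {n : ℕ∞} (hw : ContDiff ℝ n w) :
    ContDiff ℝ n (fun u => ∫ t in (0 : ℝ)..1, w (t, u)) := by
  let φ : ContDiffBump (-1 : ℝ) := ⟨1, 2, one_pos, one_lt_two⟩
  let g : V → ℝ → F := fun u x => φ x • w (-x, u)
  have hφ : ∀ t ∈ Ioc (0 : ℝ) 1, φ (-t) = 1 := fun t ht =>
    φ.one_of_mem_closedBall <| by
      rw [mem_closedBall, Real.dist_eq, abs_le]
      constructor <;> linarith [ht.1, ht.2]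
  have hg : ContDiff ℝ n (fun p : V × ℝ => φ p.2 • w (-p.2, p.1)) :=
    (φ.contDiff.comp contDiff_snd).smul (hw.comp (contDiff_snd.neg.prodMk contDiff_fst))
  have hf : LocallyIntegrable (indicator (Ioc (0 : ℝ) 1) (1 : ℝ → ℝ)) :=
    (locallyIntegrable_const 1).indicator measurableSet_Ioc
  have key := contDiffOn_convolution_right_with_param_comp (μ := volume) (g := g)
    (ContinuousLinearMap.lsmul ℝ ℝ : ℝ →L[ℝ] F →L[ℝ] F)
    (contDiffOn_const (c := (0 : ℝ))) isOpen_univ (isCompact_closedBall (-1 : ℝ) 2)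
    (fun u x _ hx => by
      simp only [g, φ.zero_of_le_dist (not_le.1 hx).le, zero_smul]) hf hg.contDiffOn
  refine contDiffOn_univ.1 (key.congr fun u _ => ?_)
  rw [convolution_def, intervalIntegral.integral_of_le zero_le_one,
    ← integral_indicator measurableSet_Ioc]
  congr 1 with t
  by_cases ht : t ∈ Ioc (0 : ℝ) 1
  · simp [g, ht, hφ t ht]
  · simp [ht]

end ParametricIntegral

section NormedRing

variable {R : Type*} [NormedRing R] {a b : R}

lemma norm_mul_sub_one_le {α β : ℝ} (ha : ‖a - 1‖ ≤ α) (hb : ‖b - 1‖ ≤ β) :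
    ‖a * b - 1‖ ≤ α + β + α * β := by
  have hα : 0 ≤ α := (norm_nonneg _).trans ha
  calc ‖a * b - 1‖ = ‖(a - 1) + (b - 1) + (a - 1) * (b - 1)‖ := by congr 1; noncomm_ring
    _ ≤ ‖a - 1‖ + ‖b - 1‖ + ‖a - 1‖ * ‖b - 1‖ :=
      (norm_add_le _ _).trans (add_le_add (norm_add_le _ _) (norm_mul_le _ _))
    _ ≤ α + β + α * β := by gcongr

lemma norm_sub_one_le_of_mul_eq_one {ε : ℝ} (hε : ε ≤ 1 / 2) (hb : ‖b - 1‖ ≤ ε)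
    (hba : b * a = 1) : ‖a - 1‖ ≤ 2 * ε := by
  have key : ‖a - 1‖ ≤ ‖b - 1‖ * ‖a - 1‖ + ‖b - 1‖ := by
    calc ‖a - 1‖ = ‖(b - 1) * (a - 1) + (b - 1)‖ := by
          rw [← norm_neg]
          congr 1
          linear_combination (norm := noncomm_ring) -hba
      _ ≤ ‖b - 1‖ * ‖a - 1‖ + ‖b - 1‖ :=
        (norm_add_le _ _).trans (by gcongr; exact norm_mul_le _ _)
  nlinarith [norm_nonneg (a - 1)]

end NormedRing

section NearIdentity

variable {V : Type*} [NormedAddCommGroup V] [NormedSpace ℝ V]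

/-- `f` restricts to a `C^∞` diffeomorphism from `U` onto an open set. As `f` itself, its inverse is
a function on the whole space, whose values off `f '' U` are irrelevant. -/
structure IsSmoothDiffeoOn (f : V → V) (U : Set V) : Prop where
  contDiffOn : ContDiffOn ℝ ∞ f U
  injOn : InjOn f U
  isOpen_image : IsOpen (f '' U)
  exists_inverse : ∃ finv, ContDiffOn ℝ ∞ finv (f '' U) ∧ ∀ x ∈ U, finv (f x) = x

variable {g : V → V} {U : Set V} {c : NNReal}

lemma approximatesLinearOn_refl (hU : Convex ℝ U) (hg : ∀ x ∈ U, DifferentiableAt ℝ g x)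
    (hc : ∀ x ∈ U, ‖fderiv ℝ g x - 1‖ ≤ c) :
    ApproximatesLinearOn g (ContinuousLinearEquiv.refl ℝ V : V →L[ℝ] V) U c :=
  fun _ hx _ hy => hU.norm_image_sub_le_of_norm_fderiv_le' hg hc hy hx

lemma subsingleton_or_lt_nnnorm_refl_symm_inv (hc : c < 1) :
    Subsingleton V ∨ c < ‖((ContinuousLinearEquiv.refl ℝ V).symm : V →L[ℝ] V)‖₊⁻¹ := by
  refine (subsingleton_or_nontrivial V).imp_right fun (_ : Nontrivial V) => ?_
  have : ‖((ContinuousLinearEquiv.refl ℝ V).symm : V →L[ℝ] V)‖₊ = 1 :=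
    NNReal.eq ContinuousLinearMap.norm_id
  rwa [this, inv_one]

lemma fderiv_mul_fderiv_of_rightInverse {H : V → V} (hg : Differentiable ℝ g)
    (hH : Differentiable ℝ H) (h : Function.RightInverse H g) (u : V) :
    fderiv ℝ g (H u) * fderiv ℝ H u = 1 := by
  have hcomp : fderiv ℝ (g ∘ H) u = fderiv ℝ g (H u) * fderiv ℝ H u :=
    fderiv_comp u (hg _) (hH u)
  rw [← hcomp, h.comp_eq_id, fderiv_id, ContinuousLinearMap.one_def]

variable [CompleteSpace V]

lemma exists_continuousLinearEquiv_of_norm_sub_one_lt_one {A : V →L[ℝ] V} (hA : ‖A - 1‖ < 1) :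
    ∃ e : V ≃L[ℝ] V, (e : V →L[ℝ] V) = A := by
  obtain ⟨u, hu⟩ : IsUnit A := by
    rw [← sub_sub_cancel 1 A]
    exact isUnit_one_sub_of_norm_lt_one (by rwa [norm_sub_rev])
  exact ⟨ContinuousLinearEquiv.unitsEquiv ℝ V u, hu⟩

lemma isSmoothDiffeoOn_of_norm_fderiv_sub_one_le (hUo : IsOpen U) (hU : Convex ℝ U)
    (hg : ContDiffOn ℝ ∞ g U) (hc1 : c < 1) (hc : ∀ x ∈ U, ‖fderiv ℝ g x - 1‖ ≤ c) :
    IsSmoothDiffeoOn g U := by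
  have hga : ∀ x ∈ U, ContDiffAt ℝ ∞ g x := fun x hx => hg.contDiffAt (hUo.mem_nhds hx)
  have hgd : ∀ x ∈ U, DifferentiableAt ℝ g x := fun x hx => (hga x hx).differentiableAt (by simp)
  let Φ := (approximatesLinearOn_refl hU hgd hc).toOpenPartialHomeomorph g U
    (subsingleton_or_lt_nnnorm_refl_symm_inv hc1) hUo
  refine ⟨hg, Φ.injOn, Φ.open_target, Φ.symm, fun u hu => ?_, fun x hx => Φ.left_inv hx⟩
  have hx : Φ.symm u ∈ U := Φ.map_target hu
  obtain ⟨e, he⟩ := exists_continuousLinearEquiv_of_norm_sub_one_lt_one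
    ((hc _ hx).trans_lt (NNReal.coe_lt_one.2 hc1))
  refine (Φ.contDiffAt_symm hu (f₀' := e) ?_ (hga _ hx)).contDiffWithinAt
  rw [he]
  exact (hgd _ hx).hasFDerivAt

lemma surjective_of_norm_fderiv_sub_one_le (hg : Differentiable ℝ g) (hc1 : c < 1)
    (hc : ∀ x, ‖fderiv ℝ g x - 1‖ ≤ c) : Function.Surjective g :=
  (approximatesLinearOn_refl convex_univ (fun x _ => hg x) fun x _ => hc x).surjective
    (subsingleton_or_lt_nnnorm_refl_symm_inv hc1)

lemma exists_contDiff_inverse (hg : ContDiff ℝ ∞ g) {ε : ℝ} (hε : ε ≤ 1 / 2)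
    (hb : ∀ x, ‖fderiv ℝ g x - 1‖ ≤ ε) :
    ∃ H : V → V, ContDiff ℝ ∞ H ∧ Function.LeftInverse H g ∧ Function.RightInverse H g ∧
      ∀ u, ‖fderiv ℝ H u - 1‖ ≤ 2 * ε := by
  have hgd : Differentiable ℝ g := hg.differentiable (by simp)
  lift ε to NNReal using (norm_nonneg _).trans (hb 0)
  have hε1 : ε < 1 := by rw [← NNReal.coe_lt_one]; linarith
  have hsurj := surjective_of_norm_fderiv_sub_one_le hgd hε1 hb
  obtain ⟨H, hH, hleft⟩ := (isSmoothDiffeoOn_of_norm_fderiv_sub_one_le isOpen_univ convex_univ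
    hg.contDiffOn hε1 fun x _ => hb x).exists_inverse
  rw [image_univ, hsurj.range_eq, contDiffOn_univ] at hH
  have hleft : Function.LeftInverse H g := fun x => hleft x (mem_univ x)
  have hright := hleft.rightInverse_of_surjective hsurj
  exact ⟨H, hH, hleft, hright, fun u => norm_sub_one_le_of_mul_eq_one hε (hb _)
    (fderiv_mul_fderiv_of_rightInverse hgd (hH.differentiable (by simp)) hright u)⟩

end NearIdentity

section PrimitiveAlong

variable {V : Type*} [NormedAddCommGroup V] [InnerProductSpace ℝ V] {e : V}

/-- The linear map multiplying the component along the unit vector `e` by `t` and fixing the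
orthogonal complement of `e`. -/
noncomputable def scaleAlong (e : V) (t : ℝ) : V →L[ℝ] V :=
  1 + (t - 1) • (innerSL ℝ e).smulRight e

lemma scaleAlong_apply (e : V) (t : ℝ) (u : V) :
    scaleAlong e t u = u + ((t - 1) * ⟪e, u⟫) • e := by
  simp [scaleAlong, smul_smul]

lemma scaleAlong_one (e u : V) : scaleAlong e 1 u = u := by
  simp [scaleAlong_apply]

lemma scaleAlong_self (he : ‖e‖ = 1) (t : ℝ) : scaleAlong e t e = t • e := by
  rw [scaleAlong_apply, real_inner_self_eq_norm_sq, he]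
  module

lemma scaleAlong_of_inner_eq_zero {v : V} (h : ⟪e, v⟫ = 0) (t : ℝ) : scaleAlong e t v = v := by
  simp [scaleAlong_apply, h]

lemma norm_scaleAlong_apply_le (he : ‖e‖ = 1) {t : ℝ} (ht : t ∈ Icc (0 : ℝ) 1) (u : V) :
    ‖scaleAlong e t u‖ ≤ ‖u‖ := by
  have h : ‖scaleAlong e t u‖ ^ 2 = ‖u‖ ^ 2 - (1 - t ^ 2) * ⟪e, u⟫ ^ 2 := by
    rw [scaleAlong_apply, norm_add_sq_real, norm_smul, he, inner_smul_right,
      real_inner_comm, mul_one, Real.norm_eq_abs, sq_abs]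
    ring
  have ht2 : t ^ 2 ≤ 1 := pow_le_one₀ ht.1 ht.2
  refine le_of_sq_le_sq ?_ (norm_nonneg u)
  nlinarith [sq_nonneg ⟪e, u⟫]

lemma norm_scaleAlong_le (he : ‖e‖ = 1) {t : ℝ} (ht : t ∈ Icc (0 : ℝ) 1) :
    ‖scaleAlong e t‖ ≤ 1 :=
  ContinuousLinearMap.opNorm_le_bound _ zero_le_one fun u => by
    simpa using norm_scaleAlong_apply_le he ht u

lemma contDiff_scaleAlong (e : V) : ContDiff ℝ ∞ fun p : ℝ × V => scaleAlong e p.1 p.2 := by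
  simp only [scaleAlong_apply]
  exact contDiff_snd.add (((contDiff_fst.sub contDiff_const).mul
    (contDiff_const.inner ℝ contDiff_snd)).smul contDiff_const)

@[fun_prop]
lemma continuous_scaleAlong (e : V) : Continuous (scaleAlong e) := by
  unfold scaleAlong
  fun_prop

lemma hasDerivAt_scaleAlong (e u : V) (t : ℝ) :
    HasDerivAt (fun t => scaleAlong e t u) (⟪e, u⟫ • e) t := by
  simp only [scaleAlong_apply]
  have h : HasDerivAt (fun t : ℝ => (t - 1) * ⟪e, u⟫) ⟪e, u⟫ t := by
    simpa using ((hasDerivAt_id t).sub_const 1).mul_const ⟪e, u⟫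
  exact (h.smul_const e).const_add u

/-- The function equal to `a` on the hyperplane orthogonal to the unit vector `e`, with derivative
`w` in the direction `e`: it is `a + ∫₀^⟪e, u⟫ w`, with the integral rescaled to `[0, 1]`. -/
noncomputable def primitiveAlong (e : V) (a w : V → ℝ) (u : V) : ℝ :=
  a (scaleAlong e 0 u) + ⟪e, u⟫ * ∫ t in (0 : ℝ)..1, w (scaleAlong e t u)

variable {a w : V → ℝ}

lemma contDiff_primitiveAlong (e : V) (ha : ContDiff ℝ ∞ a) (hw : ContDiff ℝ ∞ w) :
    ContDiff ℝ ∞ (primitiveAlong e a w) :=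
  (ha.comp (scaleAlong e 0).contDiff).add
    ((innerSL ℝ e).contDiff.mul (contDiff_integral_param (hw.comp (contDiff_scaleAlong e))))

lemma continuous_fderiv_comp_scaleAlong (e : V) (hw : ContDiff ℝ ∞ w) (u : V) :
    Continuous fun t => (fderiv ℝ w (scaleAlong e t u)).comp (scaleAlong e t) := by
  have : Continuous (fderiv ℝ w) := hw.continuous_fderiv (by simp)
  fun_prop

lemma primitiveAlong_fderiv (e : V) {β : V → ℝ} (hβ : ContDiff ℝ ∞ β) :
    primitiveAlong e β (fun u => fderiv ℝ β u e) = β := by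
  ext u
  have hcont : Continuous fun t => fderiv ℝ β (scaleAlong e t u) e := by
    have : Continuous (fderiv ℝ β) := hβ.continuous_fderiv (by simp)
    fun_prop
  have key : ∫ t in (0 : ℝ)..1, ⟪e, u⟫ * fderiv ℝ β (scaleAlong e t u) e =
      β (scaleAlong e 1 u) - β (scaleAlong e 0 u) := by
    refine intervalIntegral.integral_eq_sub_of_hasDerivAt
      (f := fun t => β (scaleAlong e t u)) (fun t _ => ?_)
      ((continuous_const.mul hcont).intervalIntegrable _ _)
    refine ((hβ.differentiable (by simp) _).hasFDerivAt.comp_hasDerivAt t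
      (hasDerivAt_scaleAlong e u t)).congr_deriv ?_
    rw [map_smul, smul_eq_mul]
  rw [primitiveAlong, ← intervalIntegral.integral_const_mul, key, scaleAlong_one]
  ring

variable [FiniteDimensional ℝ V]

lemma hasFDerivAt_integral_scaleAlong (e : V) (hw : ContDiff ℝ ∞ w) (u : V) :
    HasFDerivAt (fun u => ∫ t in (0 : ℝ)..1, w (scaleAlong e t u))
      (∫ t in (0 : ℝ)..1, (fderiv ℝ w (scaleAlong e t u)).comp (scaleAlong e t)) u := by
  have hp := hw.comp (contDiff_scaleAlong e)
  refine (hasFDerivAt_integral_param (hp.of_le (by simp)) u).congr_fderiv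
    (intervalIntegral.integral_congr fun t _ => ?_)
  have h₁ : HasFDerivAt (fun v => w (scaleAlong e t v))
      ((fderiv ℝ w (scaleAlong e t u)).comp (scaleAlong e t)) u :=
    (hw.differentiable (by simp) _).hasFDerivAt.comp u (scaleAlong e t).hasFDerivAt
  exact ((hp.differentiable (by simp) (t, u)).hasFDerivAt.comp u
    (hasFDerivAt_prodMk_right t u)).unique h₁

lemma hasFDerivAt_primitiveAlong (e : V) (ha : ContDiff ℝ ∞ a) (hw : ContDiff ℝ ∞ w) (u : V) :
    HasFDerivAt (primitiveAlong e a w)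
      ((fderiv ℝ a (scaleAlong e 0 u)).comp (scaleAlong e 0) +
        (⟪e, u⟫ • (∫ t in (0 : ℝ)..1, (fderiv ℝ w (scaleAlong e t u)).comp (scaleAlong e t)) +
        (∫ t in (0 : ℝ)..1, w (scaleAlong e t u)) • innerSL ℝ e)) u :=
  ((ha.differentiable (by simp) _).hasFDerivAt.comp u (scaleAlong e 0).hasFDerivAt).add
    ((innerSL ℝ e).hasFDerivAt.mul (hasFDerivAt_integral_scaleAlong e hw u))

lemma fderiv_primitiveAlong_apply (e : V) (ha : ContDiff ℝ ∞ a) (hw : ContDiff ℝ ∞ w) (u h : V) :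
    fderiv ℝ (primitiveAlong e a w) u h =
      fderiv ℝ a (scaleAlong e 0 u) (scaleAlong e 0 h) +
      (⟪e, u⟫ * (∫ t in (0 : ℝ)..1, fderiv ℝ w (scaleAlong e t u) (scaleAlong e t h)) +
        (∫ t in (0 : ℝ)..1, w (scaleAlong e t u)) * ⟪e, h⟫) := by
  have happly := ContinuousLinearMap.intervalIntegral_apply
    ((continuous_fderiv_comp_scaleAlong e hw u).intervalIntegrable (μ := volume) 0 1) h
  simp only [ContinuousLinearMap.comp_apply] at happly
  rw [(hasFDerivAt_primitiveAlong e ha hw u).fderiv, ← happly]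
  rfl

lemma fderiv_primitiveAlong_self (he : ‖e‖ = 1) (ha : ContDiff ℝ ∞ a) (hw : ContDiff ℝ ∞ w)
    (u : V) : fderiv ℝ (primitiveAlong e a w) u e = w u := by
  have hcont : Continuous fun t => w (scaleAlong e t u) := by
    have := hw.continuous
    fun_prop
  have hcont' : Continuous fun t => ⟪e, u⟫ * fderiv ℝ w (scaleAlong e t u) (scaleAlong e t e) :=
    continuous_const.mul
      ((continuous_fderiv_comp_scaleAlong e hw u).clm_apply continuous_const)
  have key : ∫ t in (0 : ℝ)..1,
      (⟪e, u⟫ * fderiv ℝ w (scaleAlong e t u) (scaleAlong e t e) + w (scaleAlong e t u)) =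
      1 * w (scaleAlong e 1 u) - 0 * w (scaleAlong e 0 u) := by
    refine intervalIntegral.integral_eq_sub_of_hasDerivAt
      (f := fun t => t * w (scaleAlong e t u)) (fun t _ => ?_)
      ((hcont'.add hcont).intervalIntegrable _ _)
    refine ((hasDerivAt_id t).mul ((hw.differentiable (by simp) _).hasFDerivAt.comp_hasDerivAt t
      (hasDerivAt_scaleAlong e u t))).congr_deriv ?_
    simp only [Function.comp_apply, scaleAlong_self he, map_smul, smul_eq_mul, id]
    ring
  rw [intervalIntegral.integral_add (hcont'.intervalIntegrable _ _)
    (hcont.intervalIntegrable _ _), intervalIntegral.integral_const_mul, scaleAlong_one] at key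
  rw [fderiv_primitiveAlong_apply e ha hw, real_inner_self_eq_norm_sq, he, one_pow, mul_one, key,
    scaleAlong_self he]
  simp

/-- Poincaré lemma in two orthonormal directions. -/
lemma fderiv_primitiveAlong_primitiveAlong {e' : V} (he : ‖e‖ = 1) (he' : ‖e'‖ = 1)
    (hee' : ⟪e, e'⟫ = 0) {α β : V → ℝ} (hα : ContDiff ℝ ∞ α) (hβ : ContDiff ℝ ∞ β)
    (hcl : ∀ u, fderiv ℝ α u e' = fderiv ℝ β u e) (u : V) :
    fderiv ℝ (primitiveAlong e (primitiveAlong e' 0 β) α) u e = α u ∧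
    fderiv ℝ (primitiveAlong e (primitiveAlong e' 0 β) α) u e' = β u := by
  have h0 : ContDiff ℝ ∞ (0 : V → ℝ) := contDiff_const
  have hp := contDiff_primitiveAlong e' h0 hβ
  refine ⟨fderiv_primitiveAlong_self he hp hα u, ?_⟩
  calc fderiv ℝ (primitiveAlong e (primitiveAlong e' 0 β) α) u e'
      = primitiveAlong e β (fun u => fderiv ℝ β u e) u := by
        simp only [fderiv_primitiveAlong_apply e hp hα, scaleAlong_of_inner_eq_zero hee',
          fderiv_primitiveAlong_self he' h0 hβ, hcl, hee', mul_zero, add_zero, primitiveAlong]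
    _ = β u := by rw [primitiveAlong_fderiv e hβ]

end PrimitiveAlong

section C1Bound

variable {V F : Type*} [NormedAddCommGroup V] [NormedSpace ℝ V]
  [NormedAddCommGroup F] [NormedSpace ℝ F]

/-- `a` and its derivative are bounded by `ε` on the closed ball of radius `R` around `0`. -/
def C1BoundedBy (R ε : ℝ) (a : V → F) : Prop :=
  ∀ x, ‖x‖ ≤ R → ‖a x‖ ≤ ε ∧ ‖fderiv ℝ a x‖ ≤ ε

end C1Bound

section PrimitiveAlongBound

variable {V : Type*} [NormedAddCommGroup V] [InnerProductSpace ℝ V] {e : V}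
  {a w : V → ℝ} {R ε : ℝ} {u : V}

lemma norm_integral_zero_one_le {F : Type*} [NormedAddCommGroup F] [NormedSpace ℝ F]
    {f : ℝ → F} (hf : ∀ t ∈ Icc (0 : ℝ) 1, ‖f t‖ ≤ ε) : ‖∫ t in (0 : ℝ)..1, f t‖ ≤ ε := by
  simpa using intervalIntegral.norm_integral_le_of_norm_le_const (a := (0 : ℝ)) (b := 1)
    (f := f) (C := ε) fun t ht => hf t <| by
      rw [uIoc_of_le zero_le_one] at ht
      exact Ioc_subset_Icc_self ht

lemma norm_primitiveAlong_le (he : ‖e‖ = 1) (hu : ‖u‖ ≤ R)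
    (ha : ∀ v, ‖v‖ ≤ R → ‖a v‖ ≤ ε) (hw : ∀ v, ‖v‖ ≤ R → ‖w v‖ ≤ ε) :
    ‖primitiveAlong e a w u‖ ≤ (1 + R) * ε := by
  have hscale : ∀ t ∈ Icc (0 : ℝ) 1, ‖scaleAlong e t u‖ ≤ R := fun t ht =>
    (norm_scaleAlong_apply_le he ht u).trans hu
  have hinner : |⟪e, u⟫| ≤ R := (abs_real_inner_le_norm e u).trans (by rwa [he, one_mul])
  calc ‖primitiveAlong e a w u‖
      ≤ ‖a (scaleAlong e 0 u)‖ + |⟪e, u⟫| * ‖∫ t in (0 : ℝ)..1, w (scaleAlong e t u)‖ :=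
        (norm_add_le _ _).trans_eq (by rw [norm_mul, Real.norm_eq_abs ⟪e, u⟫])
    _ ≤ ε + R * ε := by
        have hR : 0 ≤ R := (norm_nonneg u).trans hu
        gcongr
        · exact ha _ (hscale 0 (by simp))
        · exact norm_integral_zero_one_le fun t ht => hw _ (hscale t ht)
    _ = (1 + R) * ε := by ring

lemma norm_fderiv_primitiveAlong_le [FiniteDimensional ℝ V] (he : ‖e‖ = 1)
    (ha : ContDiff ℝ ∞ a) (hw : ContDiff ℝ ∞ w)
    (hu : ‖u‖ ≤ R) (hba : C1BoundedBy R ε a) (hbw : C1BoundedBy R ε w) :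
    ‖fderiv ℝ (primitiveAlong e a w) u‖ ≤ (2 + R) * ε := by
  have hscale : ∀ t ∈ Icc (0 : ℝ) 1, ‖scaleAlong e t u‖ ≤ R := fun t ht =>
    (norm_scaleAlong_apply_le he ht u).trans hu
  have hinner : |⟪e, u⟫| ≤ R := (abs_real_inner_le_norm e u).trans (by rwa [he, one_mul])
  have hcomp : ∀ (A : V →L[ℝ] ℝ), ∀ t ∈ Icc (0 : ℝ) 1, ‖A‖ ≤ ε →
      ‖A.comp (scaleAlong e t)‖ ≤ ε := fun A t ht hA =>
    (A.opNorm_comp_le _).trans ((mul_le_of_le_one_right (norm_nonneg _)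
      (norm_scaleAlong_le he ht)).trans hA)
  have hinnerSL : ‖innerSL ℝ e‖ = 1 := by rw [innerSL_apply_norm, he]
  rw [(hasFDerivAt_primitiveAlong e ha hw u).fderiv]
  refine ((norm_add_le _ _).trans (add_le_add le_rfl (norm_add_le _ _))).trans ?_
  calc _ ≤ ε + (|⟪e, u⟫| * ε + ε * 1) := by
        rw [norm_smul, norm_smul, Real.norm_eq_abs ⟪e, u⟫, hinnerSL]
        gcongr
        · exact hcomp _ 0 (by simp) (hba _ (hscale 0 (by simp))).2
        · exact norm_integral_zero_one_le fun t ht => hcomp _ t ht (hbw _ (hscale t ht)).2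
        · exact norm_integral_zero_one_le fun t ht => (hbw _ (hscale t ht)).1
    _ ≤ (2 + R) * ε := by
        have hε : 0 ≤ ε := (norm_nonneg _).trans (hba u hu).1
        nlinarith

lemma C1BoundedBy.primitiveAlong [FiniteDimensional ℝ V] (he : ‖e‖ = 1)
    (ha : ContDiff ℝ ∞ a) (hw : ContDiff ℝ ∞ w)
    (hba : C1BoundedBy R ε a) (hbw : C1BoundedBy R ε w) :
    C1BoundedBy R ((2 + R) * ε) (primitiveAlong e a w) := fun u hu =>
  ⟨(norm_primitiveAlong_le he hu (fun v hv => (hba v hv).1) fun v hv => (hbw v hv).1).trans <| by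
      have hε : 0 ≤ ε := (norm_nonneg _).trans (hba u hu).1
      gcongr
      norm_num,
    norm_fderiv_primitiveAlong_le he ha hw hu hba hbw⟩

end PrimitiveAlongBound

section GeneratingFunction

variable {V : Type*} [NormedAddCommGroup V]

lemma det_one_add_smulRight [NormedSpace ℝ V] [FiniteDimensional ℝ V] (α : V →L[ℝ] ℝ) (v : V) :
    (1 + α.smulRight v : V →L[ℝ] V).det = 1 + α v :=
  LinearMap.transvection.det (α : V →ₗ[ℝ] ℝ) v

lemma det_mul [NormedSpace ℝ V] (A B : V →L[ℝ] V) : (A * B).det = A.det * B.det :=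
  LinearMap.det_comp (A : V →ₗ[ℝ] V) (B : V →ₗ[ℝ] V)

lemma det_one [NormedSpace ℝ V] : (1 : V →L[ℝ] V).det = 1 :=
  LinearMap.det_id

variable [NormedSpace ℝ V] {S : V → ℝ}

lemma contDiff_fderiv_apply (hS : ContDiff ℝ ∞ S) (e : V) :
    ContDiff ℝ ∞ fun u => fderiv ℝ S u e :=
  (hS.fderiv_right (m := ∞) (by simp)).clm_apply contDiff_const

lemma fderiv_fderiv_apply_comm (hS : ContDiff ℝ ∞ S) (e e' u : V) :
    fderiv ℝ (fun u => fderiv ℝ S u e) u e' = fderiv ℝ (fun u => fderiv ℝ S u e') u e := by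
  have hd : DifferentiableAt ℝ (fderiv ℝ S) u :=
    (hS.fderiv_right (m := ∞) (by simp)).differentiable (by simp) u
  have hsymm : IsSymmSndFDerivAt ℝ S u :=
    hS.contDiffAt.isSymmSndFDerivAt (by
      simpa using WithTop.coe_le_coe.2 (le_top : (2 : ℕ∞) ≤ ⊤))
  rw [fderiv_clm_apply hd (differentiableAt_const _),
    fderiv_clm_apply hd (differentiableAt_const _)]
  simpa using hsymm e' e

lemma fderiv_add_smul {a : V → ℝ} {u : V} (ha : DifferentiableAt ℝ a u) (e : V) :
    fderiv ℝ (fun u => u + a u • e) u = 1 + (fderiv ℝ a u).smulRight e :=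
  ((hasFDerivAt_id u).add (ha.hasFDerivAt.smul_const e)).fderiv

lemma norm_fderiv_add_smul_sub_one {a : V → ℝ} {u e : V} (ha : DifferentiableAt ℝ a u)
    (he : ‖e‖ = 1) : ‖fderiv ℝ (fun u => u + a u • e) u - 1‖ = ‖fderiv ℝ a u‖ := by
  rw [fderiv_add_smul ha, add_sub_cancel_left, ContinuousLinearMap.norm_smulRight_apply, he,
    mul_one]

/-- The maps `u ↦ u + ∂_{e'}S(u) e` and `u ↦ u + ∂_eS(u) e'` have the same Jacobian
`1 + ∂_e∂_{e'}S`. -/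
lemma exists_volumePreserving_of_generatingFunction [FiniteDimensional ℝ V] {e e' : V}
    (he : ‖e‖ = 1) (he' : ‖e'‖ = 1) (hS : ContDiff ℝ ∞ S) {ε : ℝ} (hε : ε ≤ 1 / 2)
    (hSe : ∀ u, ‖fderiv ℝ (fun u => fderiv ℝ S u e) u‖ ≤ ε)
    (hSe' : ∀ u, ‖fderiv ℝ (fun u => fderiv ℝ S u e') u‖ ≤ ε) :
    ∃ h : V → V, ContDiff ℝ ∞ h ∧ (∀ x, (fderiv ℝ h x).det = 1) ∧
      (∀ x, ‖fderiv ℝ h x - 1‖ ≤ 4 * ε) ∧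
      ∀ u, h (u + fderiv ℝ S u e' • e) = u + fderiv ℝ S u e • e' := by
  set a : V → ℝ := fun u => fderiv ℝ S u e
  set b : V → ℝ := fun u => fderiv ℝ S u e'
  have ha : ContDiff ℝ ∞ a := contDiff_fderiv_apply hS e
  have hb : ContDiff ℝ ∞ b := contDiff_fderiv_apply hS e'
  have had : Differentiable ℝ a := ha.differentiable (by simp)
  have hbd : Differentiable ℝ b := hb.differentiable (by simp)
  have hP : ContDiff ℝ ∞ fun u => u + a u • e' := contDiff_id.add (ha.smul contDiff_const)
  have hM : ContDiff ℝ ∞ fun u => u + b u • e := contDiff_id.add (hb.smul contDiff_const)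
  obtain ⟨H, hH, hleft, hright, hHb⟩ := exists_contDiff_inverse hM hε fun x =>
    (norm_fderiv_add_smul_sub_one (hbd x) he).trans_le (hSe' x)
  have hHd : Differentiable ℝ H := hH.differentiable (by simp)
  have hfderiv : ∀ x, fderiv ℝ (fun x => H x + a (H x) • e') x =
      fderiv ℝ (fun u => u + a u • e') (H x) * fderiv ℝ H x := fun x =>
    fderiv_comp x (hP.differentiable (by simp) _) (hHd x)
  refine ⟨fun x => H x + a (H x) • e', hP.comp hH, fun x => ?_, fun x => ?_, fun u => ?_⟩
  · have hJ := congrArg ContinuousLinearMap.det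
      (fderiv_mul_fderiv_of_rightInverse (hM.differentiable (by simp)) hHd hright x)
    rw [det_mul, det_one, fderiv_add_smul (hbd _), det_one_add_smulRight] at hJ
    rw [hfderiv, det_mul, fderiv_add_smul (had _), det_one_add_smulRight,
      fderiv_fderiv_apply_comm hS, hJ]
  · have hε0 : 0 ≤ ε := (norm_nonneg _).trans (hSe 0)
    rw [hfderiv]
    refine (norm_mul_sub_one_le ((norm_fderiv_add_smul_sub_one (had _) he').trans_le (hSe _))
      (hHb x)).trans ?_
    nlinarith
  · exact congrArg (fun u => u + a u • e') (hleft u)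

end GeneratingFunction

section InverseDeterminant

variable {V : Type*} [NormedAddCommGroup V] [NormedSpace ℝ V]

/-- The Jacobian of the inverse of a map with derivative `1 + A`, as a function of `A`. -/
noncomputable def invDet (A : V →L[ℝ] V) : ℝ :=
  (1 + A).det⁻¹

lemma invDet_zero : invDet (0 : V →L[ℝ] V) = 1 := by
  rw [invDet, add_zero, det_one, inv_one]

variable [FiniteDimensional ℝ V]

lemma contDiff_det : ContDiff ℝ ∞ fun A : V →L[ℝ] V => A.det := by
  let b := Module.finBasis ℝ V
  have hdet : (fun A : V →L[ℝ] V => A.det) =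
      fun A => (Matrix.of fun i j => b.coord i (A (b j))).det := by
    ext A
    refine (LinearMap.det_toMatrix b (A : V →ₗ[ℝ] V)).symm.trans (congrArg Matrix.det ?_)
    ext i j
    exact LinearMap.toMatrix_apply b b _ i j
  simp only [hdet, Matrix.det_apply, Matrix.of_apply]
  refine ContDiff.sum fun σ _ => ContDiff.const_smul _ (contDiff_prod fun j _ => ?_)
  exact (b.coord (σ j)).toContinuousLinearMap.contDiff.comp
    (contDiff_id.clm_apply contDiff_const)

lemma det_one_add_ne_zero {A : V →L[ℝ] V} (hA : ‖A‖ < 1) : (1 + A).det ≠ 0 := by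
  obtain ⟨e, he⟩ := exists_continuousLinearEquiv_of_norm_sub_one_lt_one (A := 1 + A)
    (by rwa [add_sub_cancel_left])
  rw [← he]
  exact e.toLinearEquiv.isUnit_det'.ne_zero

lemma contDiffAt_invDet {A : V →L[ℝ] V} (hA : ‖A‖ < 1) : ContDiffAt ℝ ∞ invDet A :=
  (contDiff_det.comp (contDiff_const.add contDiff_id)).contDiffAt.inv (det_one_add_ne_zero hA)

variable (V) in
lemma exists_invDet_bound : ∃ C : ℝ, ∀ A : V →L[ℝ] V, ‖A‖ ≤ 1 / 2 →
    |invDet A - 1| ≤ C * ‖A‖ ∧ ‖fderiv ℝ invDet A‖ ≤ C := by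
  have hsmooth : ∀ A ∈ closedBall (0 : V →L[ℝ] V) (1 / 2), ContDiffAt ℝ ∞ invDet A :=
    fun A hA => contDiffAt_invDet (by rw [mem_closedBall_zero_iff] at hA; linarith)
  obtain ⟨C, hC⟩ := (isCompact_closedBall (0 : V →L[ℝ] V) (1 / 2)).exists_bound_of_continuousOn
    fun A hA => ((hsmooth A hA).fderiv_right (m := 0) (by simp)).continuousAt.continuousWithinAt
  refine ⟨C, fun A hA => ?_⟩
  rw [← mem_closedBall_zero_iff] at hA
  refine ⟨?_, hC A hA⟩
  simpa [invDet_zero] using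
    (convex_closedBall (0 : V →L[ℝ] V) (1 / 2)).norm_image_sub_le_of_norm_fderiv_le
    (fun B hB => (hsmooth B hB).differentiableAt (by simp)) hC
    (mem_closedBall_self (by norm_num)) hA

end InverseDeterminant

section C1Bound

variable {V E F : Type*} [NormedAddCommGroup V] [NormedSpace ℝ V]
  [NormedAddCommGroup E] [NormedSpace ℝ E] [NormedAddCommGroup F] [NormedSpace ℝ F]
  {a b : V → F} {R R' ε ε' : ℝ}

lemma C1BoundedBy.mono (h : C1BoundedBy R ε a) (hR : R' ≤ R) (hε : ε ≤ ε') :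
    C1BoundedBy R' ε' a := fun x hx =>
  ⟨(h x (hx.trans hR)).1.trans hε, (h x (hx.trans hR)).2.trans hε⟩

lemma C1BoundedBy.zero (hε : 0 ≤ ε) : C1BoundedBy R ε (0 : V → F) := fun x _ => by
  simpa [fderiv_zero] using hε

lemma C1BoundedBy.sub (ha : Differentiable ℝ a) (hb : Differentiable ℝ b)
    (hba : C1BoundedBy R ε a) (hbb : C1BoundedBy R ε' b) :
    C1BoundedBy R (ε + ε') (fun x => a x - b x) := fun x hx => by
  rw [fderiv_fun_sub (ha x) (hb x)]
  exact ⟨(norm_sub_le _ _).trans (add_le_add (hba x hx).1 (hbb x hx).1),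
    (norm_sub_le _ _).trans (add_le_add (hba x hx).2 (hbb x hx).2)⟩

lemma C1BoundedBy.clm_comp {A : F →L[ℝ] E} (hA : ‖A‖ ≤ 1) (ha : Differentiable ℝ a)
    (hba : C1BoundedBy R ε a) : C1BoundedBy R ε (fun x => A (a x)) := fun x hx => by
  have hfderiv : fderiv ℝ (fun x => A (a x)) x = A.comp (fderiv ℝ a x) :=
    (A.hasFDerivAt.comp x (ha x).hasFDerivAt).fderiv
  rw [hfderiv]
  exact ⟨(A.le_of_opNorm_le hA _).trans (by simpa using (hba x hx).1),
    (A.opNorm_comp_le _).trans ((mul_le_of_le_one_left (norm_nonneg _) hA).trans (hba x hx).2)⟩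

lemma C1BoundedBy.comp {g : V → V} (ha : Differentiable ℝ a) (hg : Differentiable ℝ g)
    (hba : C1BoundedBy R ε a) (hgR : ∀ x, ‖x‖ ≤ R' → ‖g x‖ ≤ R)
    (hg2 : ∀ x, ‖fderiv ℝ g x‖ ≤ 2) : C1BoundedBy R' (2 * ε) (fun x => a (g x)) := fun x hx => by
  obtain ⟨h0, h1⟩ := hba _ (hgR x hx)
  have hε : 0 ≤ ε := (norm_nonneg _).trans h0
  refine ⟨h0.trans (by linarith), ?_⟩
  calc ‖fderiv ℝ (fun x => a (g x)) x‖ = ‖(fderiv ℝ a (g x)).comp (fderiv ℝ g x)‖ := by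
        rw [← fderiv_comp x (ha _) (hg x)]
        rfl
    _ ≤ ε * 2 := (ContinuousLinearMap.opNorm_comp_le _ _).trans
        (mul_le_mul h1 (hg2 x) (norm_nonneg _) hε)
    _ = 2 * ε := mul_comm _ _

lemma C1BoundedBy.invDet_sub_one [FiniteDimensional ℝ E] {C : ℝ}
    (hC : ∀ A : E →L[ℝ] E, ‖A‖ ≤ 1 / 2 →
      |invDet A - 1| ≤ C * ‖A‖ ∧ ‖fderiv ℝ invDet A‖ ≤ C)
    {A : V → E →L[ℝ] E} (hA : Differentiable ℝ A) (hA2 : ∀ x, ‖A x‖ ≤ 1 / 2)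
    (hbA : C1BoundedBy R ε A) : C1BoundedBy R (C * ε) (fun x => invDet (A x) - 1) := fun x hx => by
  obtain ⟨h0, h1⟩ := hC (A x) (hA2 x)
  have hC0 : 0 ≤ C := (norm_nonneg (fderiv ℝ invDet (A x))).trans h1
  refine ⟨h0.trans (by gcongr; exact (hbA x hx).1), ?_⟩
  have hd : DifferentiableAt ℝ invDet (A x) :=
    (contDiffAt_invDet ((hA2 x).trans_lt (by norm_num))).differentiableAt (by simp)
  calc ‖fderiv ℝ (fun x => invDet (A x) - 1) x‖
      = ‖(fderiv ℝ invDet (A x)).comp (fderiv ℝ A x)‖ := by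
        rw [fderiv_sub_const, ← fderiv_comp x hd (hA x)]
        rfl
    _ ≤ C * ε := (ContinuousLinearMap.opNorm_comp_le _ _).trans
        (mul_le_mul h1 (hbA x hx).2 (norm_nonneg _) hC0)

end C1Bound

section SmallDisplacement

variable {V : Type*} [NormedAddCommGroup V] [NormedSpace ℝ V]

/-- A displacement `v` that is smooth, bounded by `ε ≤ 1 / 2` in `C²`, fixes the origin, and for
which `x ↦ x + v x` has Jacobian `1` on the ball of radius `r` around `0`. -/
structure IsSmallDisplacement (r ε : ℝ) (v : V → V) : Prop where
  contDiff : ContDiff ℝ ∞ v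
  le_half : ε ≤ 1 / 2
  norm_le : ∀ x, ‖v x‖ ≤ ε
  norm_fderiv_le : ∀ x, ‖fderiv ℝ v x‖ ≤ ε
  norm_fderiv_fderiv_le : ∀ x, ‖fderiv ℝ (fderiv ℝ v) x‖ ≤ ε
  map_zero : v 0 = 0
  det_eq_one : ∀ x, ‖x‖ < r → (1 + fderiv ℝ v x).det = 1

end SmallDisplacement

section MixedCoordinates

variable {V : Type*} [NormedAddCommGroup V] [InnerProductSpace ℝ V] {n : ℕ}

/-- The orthogonal projection onto the span of the first `k` vectors of an orthonormal basis. -/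
noncomputable def partialProj (b : OrthonormalBasis (Fin n) ℝ V) (k : ℕ) : V →L[ℝ] V :=
  ∑ i with i.val < k, (innerSL ℝ (b i)).smulRight (b i)

lemma partialProj_apply (b : OrthonormalBasis (Fin n) ℝ V) (k : ℕ) (x : V) :
    partialProj b k x = ∑ i with i.val < k, ⟪b i, x⟫ • b i := by
  simp [partialProj]

lemma partialProj_zero (b : OrthonormalBasis (Fin n) ℝ V) : partialProj b 0 = 0 := by
  simp [partialProj]

lemma partialProj_of_le (b : OrthonormalBasis (Fin n) ℝ V) {k : ℕ} (hk : n ≤ k) (x : V) :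
    partialProj b k x = x := by
  rw [partialProj_apply, Finset.filter_true_of_mem fun i _ => i.isLt.trans_le hk, b.sum_repr' x]

lemma partialProj_succ (b : OrthonormalBasis (Fin n) ℝ V) (i : Fin n) (x : V) :
    partialProj b (i + 1) x = partialProj b i x + ⟪b i, x⟫ • b i := by
  have hfilter : ({j | j.val < i.val + 1} : Finset (Fin n)) =
      insert i ({j | j.val < i.val} : Finset (Fin n)) := by
    ext j
    simp only [Finset.mem_filter, Finset.mem_univ, true_and, Finset.mem_insert, Fin.ext_iff]
    omega
  rw [partialProj_apply, partialProj_apply, hfilter, Finset.sum_insert (by simp), add_comm]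

lemma norm_partialProj_apply_le (b : OrthonormalBasis (Fin n) ℝ V) (k : ℕ) (x : V) :
    ‖partialProj b k x‖ ≤ ‖x‖ := by
  refine le_of_sq_le_sq ?_ (norm_nonneg x)
  calc ‖partialProj b k x‖ ^ 2 = ∑ i with i.val < k, ‖⟪b i, x⟫‖ ^ 2 := by
        rw [partialProj_apply, ← real_inner_self_eq_norm_sq, b.orthonormal.inner_sum]
        simp [sq]
    _ ≤ ‖x‖ ^ 2 := b.orthonormal.sum_inner_products_le x

lemma norm_partialProj_le (b : OrthonormalBasis (Fin n) ℝ V) (k : ℕ) : ‖partialProj b k‖ ≤ 1 :=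
  ContinuousLinearMap.opNorm_le_bound _ zero_le_one fun x => by
    simpa using norm_partialProj_apply_le b k x

/-- The mixed coordinates of `x`: the first `k` coordinates of `x + v x` and the other ones
of `x`. -/
noncomputable def mixedCoords (b : OrthonormalBasis (Fin n) ℝ V) (v : V → V) (k : ℕ) (x : V) : V :=
  x + partialProj b k (v x)

/-- The point with given mixed coordinates; meaningful when `mixedCoords b v k` is bijective. -/
noncomputable def mixedCoordsInv (b : OrthonormalBasis (Fin n) ℝ V) (v : V → V) (k : ℕ) : V → V :=
  Function.invFun (mixedCoords b v k)

/-- The Jacobian of `mixedCoordsInv b v k`. -/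
noncomputable def mixedJacobian (b : OrthonormalBasis (Fin n) ℝ V) (v : V → V) (k : ℕ) (u : V) :
    ℝ :=
  invDet (partialProj b k * fderiv ℝ v (mixedCoordsInv b v k u))

/-- The `i`-th coordinate of the displacement, as a function of the mixed coordinates. -/
noncomputable def mixedDisp (b : OrthonormalBasis (Fin n) ℝ V) (v : V → V) (k : ℕ) (i : Fin n)
    (u : V) : ℝ :=
  ⟪b i, v (mixedCoordsInv b v k u)⟫

lemma mixedCoords_zero (b : OrthonormalBasis (Fin n) ℝ V) (v : V → V) (x : V) :
    mixedCoords b v 0 x = x := by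
  simp [mixedCoords, partialProj_zero]

lemma mixedCoords_succ (b : OrthonormalBasis (Fin n) ℝ V) (v : V → V) (i : Fin n) (x : V) :
    mixedCoords b v (i + 1) x = mixedCoords b v i x + ⟪b i, v x⟫ • b i := by
  rw [mixedCoords, partialProj_succ, ← add_assoc, mixedCoords]

lemma mixedCoords_of_le (b : OrthonormalBasis (Fin n) ℝ V) (v : V → V) {k : ℕ} (hk : n ≤ k)
    (x : V) : mixedCoords b v k x = x + v x := by
  rw [mixedCoords, partialProj_of_le b hk]

lemma norm_partialProj_mul_le (b : OrthonormalBasis (Fin n) ℝ V) (k : ℕ) (A : V →L[ℝ] V) :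
    ‖partialProj b k * A‖ ≤ ‖A‖ :=
  (norm_mul_le _ _).trans (mul_le_of_le_one_left (norm_nonneg _) (norm_partialProj_le b k))

namespace IsSmallDisplacement

variable {b : OrthonormalBasis (Fin n) ℝ V} {v : V → V} {r ε : ℝ}

lemma nonneg (hv : IsSmallDisplacement r ε v) : 0 ≤ ε :=
  (norm_nonneg _).trans (hv.norm_le 0)

lemma differentiable (hv : IsSmallDisplacement r ε v) : Differentiable ℝ v :=
  hv.contDiff.differentiable (by simp)

lemma contDiff_fderiv (hv : IsSmallDisplacement r ε v) : ContDiff ℝ ∞ (fderiv ℝ v) :=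
  hv.contDiff.fderiv_right (by simp)

lemma contDiff_mixedCoords (hv : IsSmallDisplacement r ε v) (k : ℕ) :
    ContDiff ℝ ∞ (mixedCoords b v k) :=
  contDiff_id.add ((partialProj b k).contDiff.comp hv.contDiff)

lemma fderiv_mixedCoords (hv : IsSmallDisplacement r ε v) (k : ℕ) (x : V) :
    fderiv ℝ (mixedCoords b v k) x = 1 + partialProj b k * fderiv ℝ v x :=
  ((hasFDerivAt_id x).add
    ((partialProj b k).hasFDerivAt.comp x (hv.differentiable x).hasFDerivAt)).fderiv

lemma norm_mixedCoords_sub_le (hv : IsSmallDisplacement r ε v) (k : ℕ) (x : V) :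
    ‖mixedCoords b v k x - x‖ ≤ ε := by
  rw [mixedCoords, add_sub_cancel_left]
  exact (norm_partialProj_apply_le b k _).trans (hv.norm_le x)

lemma norm_mixedCoords_le (hv : IsSmallDisplacement r ε v) (k : ℕ) (x : V) :
    ‖mixedCoords b v k x‖ ≤ ‖x‖ + ε := by
  linarith [norm_le_norm_add_norm_sub' (mixedCoords b v k x) x,
    hv.norm_mixedCoords_sub_le (b := b) k x]

lemma norm_partialProj_mul_fderiv_le (hv : IsSmallDisplacement r ε v) (k : ℕ) (x : V) :
    ‖partialProj b k * fderiv ℝ v x‖ ≤ ε :=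
  (norm_partialProj_mul_le b k _).trans (hv.norm_fderiv_le x)

variable [FiniteDimensional ℝ V]

lemma mixedCoordsInv_spec (hv : IsSmallDisplacement r ε v) (k : ℕ) :
    ContDiff ℝ ∞ (mixedCoordsInv b v k) ∧
      Function.LeftInverse (mixedCoordsInv b v k) (mixedCoords b v k) ∧
      Function.RightInverse (mixedCoordsInv b v k) (mixedCoords b v k) ∧
      ∀ u, ‖fderiv ℝ (mixedCoordsInv b v k) u - 1‖ ≤ 2 * ε := by
  obtain ⟨H, hH, hleft, hright, hbound⟩ := exists_contDiff_inverse
    (hv.contDiff_mixedCoords (b := b) k) hv.le_half fun x => by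
      rw [hv.fderiv_mixedCoords, add_sub_cancel_left]
      exact hv.norm_partialProj_mul_fderiv_le k x
  have hinv : mixedCoordsInv b v k = H := by
    refine ((Function.leftInverse_invFun hleft.injective).eq_rightInverse hright)
  rw [hinv]
  exact ⟨hH, hleft, hright, hbound⟩

lemma contDiff_mixedCoordsInv (hv : IsSmallDisplacement r ε v) (k : ℕ) :
    ContDiff ℝ ∞ (mixedCoordsInv b v k) :=
  (hv.mixedCoordsInv_spec k).1

lemma differentiable_mixedCoordsInv (hv : IsSmallDisplacement r ε v) (k : ℕ) :
    Differentiable ℝ (mixedCoordsInv b v k) :=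
  (hv.contDiff_mixedCoordsInv k).differentiable (by simp)

lemma mixedCoordsInv_mixedCoords (hv : IsSmallDisplacement r ε v) (k : ℕ) (x : V) :
    mixedCoordsInv b v k (mixedCoords b v k x) = x :=
  (hv.mixedCoordsInv_spec k).2.1 x

lemma mixedCoords_mixedCoordsInv (hv : IsSmallDisplacement r ε v) (k : ℕ) (u : V) :
    mixedCoords b v k (mixedCoordsInv b v k u) = u :=
  (hv.mixedCoordsInv_spec k).2.2.1 u

lemma mixedCoordsInv_zero (hv : IsSmallDisplacement r ε v) (k : ℕ) :
    mixedCoordsInv b v k 0 = 0 := by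
  simpa [mixedCoords, hv.map_zero] using hv.mixedCoordsInv_mixedCoords (b := b) k 0

lemma norm_mixedCoordsInv_le (hv : IsSmallDisplacement r ε v) (k : ℕ) (u : V) :
    ‖mixedCoordsInv b v k u‖ ≤ ‖u‖ + ε := by
  have h := hv.norm_mixedCoords_sub_le (b := b) k (mixedCoordsInv b v k u)
  rw [hv.mixedCoords_mixedCoordsInv] at h
  linarith [norm_le_norm_add_norm_sub u (mixedCoordsInv b v k u)]

lemma norm_fderiv_mixedCoordsInv_le (hv : IsSmallDisplacement r ε v) (k : ℕ) (u : V) :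
    ‖fderiv ℝ (mixedCoordsInv b v k) u‖ ≤ 2 := by
  have h1 : ‖(1 : V →L[ℝ] V)‖ ≤ 1 := ContinuousLinearMap.norm_id_le
  linarith [norm_le_norm_add_norm_sub' (fderiv ℝ (mixedCoordsInv b v k) u) 1,
    (hv.mixedCoordsInv_spec (b := b) k).2.2.2 u, hv.le_half]

lemma c1BoundedBy_comp_mixedCoordsInv {F : Type*} [NormedAddCommGroup F] [NormedSpace ℝ F]
    (hv : IsSmallDisplacement r ε v) {a : V → F} (ha : Differentiable ℝ a) {δ : ℝ}
    (hba : ∀ x, ‖a x‖ ≤ δ ∧ ‖fderiv ℝ a x‖ ≤ δ) (k : ℕ) (R : ℝ) :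
    C1BoundedBy R (2 * δ) (fun u => a (mixedCoordsInv b v k u)) :=
  C1BoundedBy.comp (R := R + ε) ha (hv.differentiable_mixedCoordsInv k) (fun x _ => hba x)
    (fun u hu => (hv.norm_mixedCoordsInv_le k u).trans (by gcongr))
    (hv.norm_fderiv_mixedCoordsInv_le k)

lemma contDiff_mixedDisp (hv : IsSmallDisplacement r ε v) (k : ℕ) (i : Fin n) :
    ContDiff ℝ ∞ (mixedDisp b v k i) :=
  contDiff_const.inner ℝ (hv.contDiff.comp (hv.contDiff_mixedCoordsInv k))

lemma differentiable_mixedDisp (hv : IsSmallDisplacement r ε v) (k : ℕ) (i : Fin n) :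
    Differentiable ℝ (mixedDisp b v k i) :=
  (hv.contDiff_mixedDisp k i).differentiable (by simp)

lemma c1BoundedBy_mixedDisp (hv : IsSmallDisplacement r ε v) (k : ℕ) (i : Fin n) (R : ℝ) :
    C1BoundedBy R (2 * ε) (mixedDisp b v k i) :=
  (hv.c1BoundedBy_comp_mixedCoordsInv hv.differentiable
    (fun x => ⟨hv.norm_le x, hv.norm_fderiv_le x⟩) k R).clm_comp
    (A := innerSL ℝ (b i)) (by simp [innerSL_apply_norm])
    (hv.differentiable.comp (hv.differentiable_mixedCoordsInv k))

lemma contDiff_mixedJacobian (hv : IsSmallDisplacement r ε v) (k : ℕ) :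
    ContDiff ℝ ∞ (mixedJacobian b v k) := by
  refine contDiff_iff_contDiffAt.2 fun u => (contDiffAt_invDet ?_).comp u
    (contDiff_const.clm_comp (hv.contDiff_fderiv.comp (hv.contDiff_mixedCoordsInv k))).contDiffAt
  exact (hv.norm_partialProj_mul_fderiv_le k _).trans_lt (by linarith [hv.le_half])

lemma mixedJacobian_eq_det (hv : IsSmallDisplacement r ε v) (k : ℕ) (u : V) :
    mixedJacobian b v k u = (fderiv ℝ (mixedCoordsInv b v k) u).det := by
  have h := congrArg ContinuousLinearMap.det (fderiv_mul_fderiv_of_rightInverse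
    ((hv.contDiff_mixedCoords k).differentiable (by simp)) (hv.differentiable_mixedCoordsInv k)
    (hv.mixedCoords_mixedCoordsInv (b := b) k) u)
  rw [det_mul, det_one, hv.fderiv_mixedCoords] at h
  exact (eq_inv_of_mul_eq_one_right h).symm

variable (b) in
lemma exists_c1BoundedBy_mixedJacobian_sub_one :
    ∃ C : ℝ, ∀ (r ε : ℝ) (v : V → V), IsSmallDisplacement r ε v → ∀ k R,
      C1BoundedBy R (C * ε) (fun u => mixedJacobian b v k u - 1) := by
  obtain ⟨C, hC⟩ := exists_invDet_bound V
  refine ⟨C * 2, fun r ε v hv k R => ?_⟩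
  have hmul : ‖ContinuousLinearMap.mul ℝ (V →L[ℝ] V) (partialProj b k)‖ ≤ 1 :=
    (ContinuousLinearMap.opNorm_mul_apply_le ..).trans (norm_partialProj_le b k)
  have hd : Differentiable ℝ fun u => fderiv ℝ v (mixedCoordsInv b v k u) :=
    (hv.contDiff_fderiv.differentiable (by simp)).comp (hv.differentiable_mixedCoordsInv k)
  rw [mul_assoc]
  refine C1BoundedBy.invDet_sub_one hC
    ((ContinuousLinearMap.mul ℝ (V →L[ℝ] V) (partialProj b k)).differentiable.comp hd)
    (fun u => (hv.norm_partialProj_mul_fderiv_le k _).trans hv.le_half)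
    (C1BoundedBy.clm_comp hmul hd ?_)
  exact hv.c1BoundedBy_comp_mixedCoordsInv (hv.contDiff_fderiv.differentiable (by simp))
    (fun x => ⟨hv.norm_fderiv_le x, hv.norm_fderiv_fderiv_le x⟩) k R

end IsSmallDisplacement

end MixedCoordinates

section IntermediateMaps

variable {V : Type*} [NormedAddCommGroup V] [InnerProductSpace ℝ V] {n : ℕ}

/-- The mixed coordinates of index `i` as a function of those of index `i + 1`. -/
noncomputable def mixedCoordsPred (b : OrthonormalBasis (Fin n) ℝ V) (v : V → V) (i : Fin n)
    (u : V) : V :=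
  mixedCoords b v i (mixedCoordsInv b v (i + 1) u)

/-- The displacement of `intermediateMap b v i` in the direction `b i`, as a function of the mixed
coordinates of index `i`. It is a primitive of `mixedJacobian b v i - 1` along `b i`, so that the
intermediate map has Jacobian `1`; its initial values make the first intermediate map the identity
and the last one `x ↦ x + v x`. -/
noncomputable def correction (b : OrthonormalBasis (Fin n) ℝ V) (v : V → V) (i : Fin n) : V → ℝ :=
  primitiveAlong (b i) (fun u => mixedDisp b v i i (partialProj b i u))
    (fun u => mixedJacobian b v i u - 1)

/-- The displacement of `intermediateMap b v i` in the direction `b i`, as a function of the mixed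
coordinates of index `i + 1`. -/
noncomputable def succCorrection (b : OrthonormalBasis (Fin n) ℝ V) (v : V → V) (i : Fin n)
    (u : V) : ℝ :=
  correction b v i (mixedCoordsPred b v i u) - mixedDisp b v (i + 1) i u

/-- The `i`-th intermediate volume-preserving map: its coordinates before the `i`-th are those of
`x + v x`, and the ones after it are those of `x`. -/
noncomputable def intermediateMap (b : OrthonormalBasis (Fin n) ℝ V) (v : V → V) (i : Fin n)
    (x : V) : V :=
  mixedCoords b v i x + correction b v i (mixedCoords b v i x) • b i

namespace IsSmallDisplacement

variable {b : OrthonormalBasis (Fin n) ℝ V} {v : V → V} {r ε : ℝ} [FiniteDimensional ℝ V]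

lemma mixedCoordsPred_eq (hv : IsSmallDisplacement r ε v) (i : Fin n) (u : V) :
    mixedCoordsPred b v i u = u + (-mixedDisp b v (i + 1) i u) • b i := by
  have h := mixedCoords_succ b v i (mixedCoordsInv b v (i + 1) u)
  rw [hv.mixedCoords_mixedCoordsInv] at h
  rw [neg_smul, ← sub_eq_add_neg, eq_sub_iff_add_eq]
  exact h.symm

lemma contDiff_mixedCoordsPred (hv : IsSmallDisplacement r ε v) (i : Fin n) :
    ContDiff ℝ ∞ (mixedCoordsPred b v i) :=
  (hv.contDiff_mixedCoords i).comp (hv.contDiff_mixedCoordsInv (i + 1))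

lemma fderiv_mixedCoordsPred (hv : IsSmallDisplacement r ε v) (i : Fin n) (u : V) :
    fderiv ℝ (mixedCoordsPred b v i) u =
      1 + (-fderiv ℝ (mixedDisp b v (i + 1) i) u).smulRight (b i) := by
  rw [funext (hv.mixedCoordsPred_eq i), ← fderiv_fun_neg]
  exact fderiv_add_smul (hv.differentiable_mixedDisp _ _ u).neg (b i)

lemma norm_mixedCoordsPred_le (hv : IsSmallDisplacement r ε v) (i : Fin n) (u : V) :
    ‖mixedCoordsPred b v i u‖ ≤ ‖u‖ + 2 * ε :=
  (hv.norm_mixedCoords_le _ _).trans (by linarith [hv.norm_mixedCoordsInv_le (b := b) (i + 1) u])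

lemma norm_fderiv_mixedCoordsPred_le (hv : IsSmallDisplacement r ε v) (i : Fin n) (u : V) :
    ‖fderiv ℝ (mixedCoordsPred b v i) u‖ ≤ 2 := by
  have hdisp := (hv.c1BoundedBy_mixedDisp (b := b) (i + 1) i ‖u‖ u le_rfl).2
  have hone : ‖(1 : V →L[ℝ] V)‖ ≤ 1 := ContinuousLinearMap.norm_id_le
  rw [hv.fderiv_mixedCoordsPred]
  refine (norm_add_le _ _).trans ?_
  rw [ContinuousLinearMap.norm_smulRight_apply, norm_neg, b.norm_eq_one, mul_one]
  linarith [hv.le_half]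

lemma mixedJacobian_succ (hv : IsSmallDisplacement r ε v) (i : Fin n) (u : V) :
    mixedJacobian b v (i + 1) u = mixedJacobian b v i (mixedCoordsPred b v i u) *
      (1 - fderiv ℝ (mixedDisp b v (i + 1) i) u (b i)) := by
  have hfactor : mixedCoordsInv b v (i + 1) = mixedCoordsInv b v i ∘ mixedCoordsPred b v i :=
    funext fun u => (hv.mixedCoordsInv_mixedCoords i _).symm
  rw [hv.mixedJacobian_eq_det, hv.mixedJacobian_eq_det, hfactor,
    fderiv_comp u (hv.differentiable_mixedCoordsInv i _)
      ((hv.contDiff_mixedCoordsPred i).differentiable (by simp) u)]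
  rw [← ContinuousLinearMap.mul_def, det_mul, hv.fderiv_mixedCoordsPred, det_one_add_smulRight]
  rfl

lemma contDiff_mixedDisp_partialProj (hv : IsSmallDisplacement r ε v) (i : Fin n) :
    ContDiff ℝ ∞ fun u => mixedDisp b v i i (partialProj b i u) :=
  (hv.contDiff_mixedDisp i i).comp (partialProj b i).contDiff

lemma contDiff_correction (hv : IsSmallDisplacement r ε v) (i : Fin n) :
    ContDiff ℝ ∞ (correction b v i) :=
  contDiff_primitiveAlong _ (hv.contDiff_mixedDisp_partialProj i)
    ((hv.contDiff_mixedJacobian i).sub contDiff_const)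

lemma fderiv_correction (hv : IsSmallDisplacement r ε v) (i : Fin n) (u : V) :
    fderiv ℝ (correction b v i) u (b i) = mixedJacobian b v i u - 1 :=
  fderiv_primitiveAlong_self (b.norm_eq_one i) (hv.contDiff_mixedDisp_partialProj i)
    ((hv.contDiff_mixedJacobian i).sub contDiff_const) u

lemma contDiff_succCorrection (hv : IsSmallDisplacement r ε v) (i : Fin n) :
    ContDiff ℝ ∞ (succCorrection b v i) :=
  ((hv.contDiff_correction i).comp (hv.contDiff_mixedCoordsPred i)).sub (hv.contDiff_mixedDisp _ _)

lemma fderiv_succCorrection (hv : IsSmallDisplacement r ε v) (i : Fin n) (u : V) :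
    fderiv ℝ (succCorrection b v i) u (b i) = mixedJacobian b v (i + 1) u - 1 := by
  have hfderiv : fderiv ℝ (succCorrection b v i) u =
      (fderiv ℝ (correction b v i) (mixedCoordsPred b v i u)).comp
        (fderiv ℝ (mixedCoordsPred b v i) u) - fderiv ℝ (mixedDisp b v (i + 1) i) u :=
    ((((hv.contDiff_correction i).differentiable (by simp) _).hasFDerivAt.comp u
      ((hv.contDiff_mixedCoordsPred i).differentiable (by simp) u).hasFDerivAt).sub
      (hv.differentiable_mixedDisp _ _ u).hasFDerivAt).fderiv
  have hdir : fderiv ℝ (mixedCoordsPred b v i) u (b i) =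
      (1 - fderiv ℝ (mixedDisp b v (i + 1) i) u (b i)) • b i := by
    rw [hv.fderiv_mixedCoordsPred]
    simp [sub_eq_add_neg, add_smul]
  rw [hfderiv, sub_apply, ContinuousLinearMap.comp_apply, hdir, map_smul, hv.fderiv_correction,
    hv.mixedJacobian_succ, smul_eq_mul]
  ring

variable (b) in
lemma exists_c1BoundedBy_correction (R : ℝ) :
    ∃ C : ℝ, ∀ (r ε : ℝ) (v : V → V), IsSmallDisplacement r ε v → ∀ i,
      C1BoundedBy R (C * ε) (correction b v i) := by
  obtain ⟨C, hC⟩ := exists_c1BoundedBy_mixedJacobian_sub_one b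
  refine ⟨(2 + R) * max 4 C, fun r ε v hv i => ?_⟩
  have hε := hv.nonneg
  have hdisp : C1BoundedBy R (2 * (2 * ε)) fun u => mixedDisp b v i i (partialProj b i u) :=
    (hv.c1BoundedBy_mixedDisp i i R).comp (hv.differentiable_mixedDisp i i)
      (partialProj b i).differentiable (fun x hx => (norm_partialProj_apply_le b i x).trans hx)
      fun x => by
        rw [ContinuousLinearMap.fderiv]
        exact (norm_partialProj_le b i).trans one_le_two
  rw [mul_assoc]
  exact C1BoundedBy.primitiveAlong (b.norm_eq_one i) (hv.contDiff_mixedDisp_partialProj i)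
    ((hv.contDiff_mixedJacobian i).sub contDiff_const)
    (hdisp.mono le_rfl (by nlinarith [le_max_left 4 C]))
    ((hC r ε v hv i R).mono le_rfl (by gcongr; exact le_max_right 4 C))

variable (b) in
lemma exists_c1BoundedBy_succCorrection (R : ℝ) :
    ∃ C : ℝ, ∀ (r ε : ℝ) (v : V → V), IsSmallDisplacement r ε v → ∀ i,
      C1BoundedBy R (C * ε) (succCorrection b v i) := by
  obtain ⟨C, hC⟩ := exists_c1BoundedBy_correction b (R + 1)
  refine ⟨2 * C + 2, fun r ε v hv i => ?_⟩
  have hd := (hv.contDiff_correction (b := b) i).differentiable (by simp)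
  have hdPred := (hv.contDiff_mixedCoordsPred (b := b) i).differentiable (by simp)
  have hpred := (hC r ε v hv i).comp (R' := R) hd hdPred
    (fun x hx => (hv.norm_mixedCoordsPred_le i x).trans (by linarith [hv.le_half]))
    (hv.norm_fderiv_mixedCoordsPred_le i)
  exact (hpred.sub (hd.comp hdPred) (hv.differentiable_mixedDisp _ _)
    (hv.c1BoundedBy_mixedDisp _ _ R)).mono le_rfl (by linarith)

variable (b) in
lemma exists_generatingFunction {R : ℝ} (hR : 0 ≤ R) :
    ∃ C : ℝ, ∀ (r ε : ℝ) (v : V → V), IsSmallDisplacement r ε v → ∀ i j : Fin n,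
      (j : ℕ) = i + 1 → ∃ S : V → ℝ, ContDiff ℝ ∞ S ∧
        (∀ u, fderiv ℝ S u (b i) = correction b v j u) ∧
        (∀ u, fderiv ℝ S u (b j) = succCorrection b v i u) ∧
        C1BoundedBy R (C * ε) S ∧ C1BoundedBy R (C * ε) (correction b v j) ∧
        C1BoundedBy R (C * ε) (succCorrection b v i) := by
  obtain ⟨C₁, hC₁⟩ := exists_c1BoundedBy_correction b R
  obtain ⟨C₂, hC₂⟩ := exists_c1BoundedBy_succCorrection b R
  set M := max 0 (max C₁ C₂)
  refine ⟨(2 + R) * ((2 + R) * M), fun r ε v hv i j hij => ?_⟩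
  have hε := hv.nonneg
  have hM0 : 0 ≤ M := le_max_left 0 _
  have hR1 : 1 ≤ 2 + R := by linarith
  have hMR : M ≤ (2 + R) * M := le_mul_of_one_le_left hM0 hR1
  have hMR' : (2 + R) * M ≤ (2 + R) * ((2 + R) * M) := le_mul_of_one_le_left (by positivity) hR1
  have hne : i ≠ j := fun h => by omega
  have hα := hv.contDiff_correction (b := b) j
  have hβ := hv.contDiff_succCorrection (b := b) i
  have h0 : ContDiff ℝ ∞ (0 : V → ℝ) := contDiff_const
  have hbα : C1BoundedBy R (M * ε) (correction b v j) := (hC₁ r ε v hv j).mono le_rfl <| by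
    gcongr
    exact (le_max_left _ _).trans (le_max_right _ _)
  have hbβ : C1BoundedBy R (M * ε) (succCorrection b v i) := (hC₂ r ε v hv i).mono le_rfl <| by
    gcongr
    exact (le_max_right _ _).trans (le_max_right _ _)
  have hpot := fderiv_primitiveAlong_primitiveAlong (b.norm_eq_one i) (b.norm_eq_one j)
    (b.orthonormal.2 hne) hα hβ fun u => by
      rw [hv.fderiv_correction, hv.fderiv_succCorrection, hij]
  have hbp : C1BoundedBy R ((2 + R) * (M * ε)) (primitiveAlong (b j) 0 (succCorrection b v i)) :=
    C1BoundedBy.primitiveAlong (b.norm_eq_one j) h0 hβ (C1BoundedBy.zero (by positivity)) hbβ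
  refine ⟨_, contDiff_primitiveAlong _ (contDiff_primitiveAlong _ h0 hβ) hα,
    fun u => (hpot u).1, fun u => (hpot u).2, ?_,
    hbα.mono le_rfl (by gcongr; exact hMR.trans hMR'),
    hbβ.mono le_rfl (by gcongr; exact hMR.trans hMR')⟩
  rw [mul_assoc, mul_assoc]
  exact C1BoundedBy.primitiveAlong (b.norm_eq_one i) (contDiff_primitiveAlong _ h0 hβ) hα hbp
    (hbα.mono le_rfl (by rw [← mul_assoc]; gcongr))

lemma intermediateMap_eq_succCorrection (hv : IsSmallDisplacement r ε v) (i : Fin n) (x : V) :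
    intermediateMap b v i x = mixedCoords b v (i + 1) x +
      succCorrection b v i (mixedCoords b v (i + 1) x) • b i := by
  have hpred : mixedCoordsPred b v i (mixedCoords b v (i + 1) x) = mixedCoords b v i x := by
    rw [mixedCoordsPred, hv.mixedCoordsInv_mixedCoords]
  have hdisp : mixedDisp b v (i + 1) i (mixedCoords b v (i + 1) x) = ⟪b i, v x⟫ := by
    rw [mixedDisp, hv.mixedCoordsInv_mixedCoords]
  rw [intermediateMap, succCorrection, hpred, hdisp, mixedCoords_succ]
  module

lemma intermediateMap_of_val_eq_zero (hv : IsSmallDisplacement r ε v) {i : Fin n}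
    (hi : (i : ℕ) = 0) (x : V) : intermediateMap b v i x = x := by
  have hcorr : correction b v i x = 0 := by
    simp [correction, primitiveAlong, mixedDisp, mixedJacobian, hi, partialProj_zero,
      hv.mixedCoordsInv_zero, hv.map_zero, invDet_zero]
  rw [intermediateMap, hi, mixedCoords_zero, hcorr, zero_smul, add_zero]

lemma fderiv_mixedDisp_of_val_add_one_eq (hv : IsSmallDisplacement r ε v) {i : Fin n}
    (hi : (i : ℕ) + 1 = n) {u : V} (hu : ‖mixedCoordsInv b v i u‖ < r) :
    fderiv ℝ (mixedDisp b v i i) u (b i) = mixedJacobian b v i u - 1 := by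
  set H := mixedCoordsInv b v i
  have hdH : DifferentiableAt ℝ H u := hv.differentiable_mixedCoordsInv i u
  have hmap : (fun x => x + v x) ∘ H = fun u => u + mixedDisp b v i i u • b i := by
    ext1 u
    rw [Function.comp_apply, ← mixedCoords_of_le b v hi.ge, mixedCoords_succ,
      hv.mixedCoords_mixedCoordsInv, mixedDisp]
  have hfderiv : HasFDerivAt ((fun x => x + v x) ∘ H)
      ((1 + fderiv ℝ v (H u)) * fderiv ℝ H u) u :=
    ((hasFDerivAt_id _).add (hv.differentiable _).hasFDerivAt).comp u hdH.hasFDerivAt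
  have hdet := congrArg ContinuousLinearMap.det hfderiv.fderiv
  rw [hmap, fderiv_add_smul (hv.differentiable_mixedDisp i i u), det_one_add_smulRight, det_mul,
    hv.det_eq_one _ hu, ← hv.mixedJacobian_eq_det] at hdet
  linarith

lemma correction_of_val_add_one_eq (hv : IsSmallDisplacement r ε v) {i : Fin n}
    (hi : (i : ℕ) + 1 = n) {u : V} (hu : ‖u‖ + ε < r) :
    correction b v i u = mixedDisp b v i i u := by
  have hbase : partialProj b i (scaleAlong (b i) 0 u) = scaleAlong (b i) 0 u := by
    have h := partialProj_succ b i (scaleAlong (b i) 0 u)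
    have hinner : ⟪b i, scaleAlong (b i) 0 u⟫ = 0 := by
      rw [scaleAlong_apply, inner_add_right, inner_smul_right, real_inner_self_eq_norm_sq,
        b.norm_eq_one]
      ring
    rw [partialProj_of_le b hi.ge, hinner, zero_smul, add_zero] at h
    exact h.symm
  rw [← primitiveAlong_fderiv (b i) (hv.contDiff_mixedDisp i i), correction, primitiveAlong,
    primitiveAlong, hbase]
  congr 2
  refine intervalIntegral.integral_congr fun t ht => ?_
  rw [uIcc_of_le zero_le_one] at ht
  refine (hv.fderiv_mixedDisp_of_val_add_one_eq hi ?_).symm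
  linarith [hv.norm_mixedCoordsInv_le (b := b) i (scaleAlong (b i) t u),
    norm_scaleAlong_apply_le (b.norm_eq_one i) ht u]

lemma intermediateMap_of_val_add_one_eq (hv : IsSmallDisplacement r ε v) {i : Fin n}
    (hi : (i : ℕ) + 1 = n) {x : V} (hx : ‖x‖ + 2 * ε < r) :
    intermediateMap b v i x = x + v x := by
  have hu : ‖mixedCoords b v i x‖ + ε < r := by
    linarith [hv.norm_mixedCoords_le (b := b) i x]
  rw [intermediateMap, hv.correction_of_val_add_one_eq hi hu, mixedDisp,
    hv.mixedCoordsInv_mixedCoords, ← mixedCoords_succ, mixedCoords_of_le b v hi.ge]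

end IsSmallDisplacement

end IntermediateMaps

section CutoffGeneratingFunction

variable {V : Type*} [NormedAddCommGroup V] [NormedSpace ℝ V] {ρ S : V → ℝ} {R M ε : ℝ} {e : V}

/-- A smooth function supported in the closed ball of radius `R` around `0`, with `C²` norm at most
`M`; the cutoffs of the generating functions are of this kind. -/
structure IsCutoff (R M : ℝ) (ρ : V → ℝ) : Prop where
  contDiff : ContDiff ℝ ∞ ρ
  norm_le : ∀ x, ‖ρ x‖ ≤ M
  norm_fderiv_le : ∀ x, ‖fderiv ℝ ρ x‖ ≤ M
  norm_fderiv_fderiv_le : ∀ x, ‖fderiv ℝ (fderiv ℝ ρ) x‖ ≤ M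
  eq_zero : ∀ x, R < ‖x‖ → ρ x = 0

lemma fderiv_mul_apply (hρ : ContDiff ℝ ∞ ρ) (hS : ContDiff ℝ ∞ S) (e : V) :
    (fun u => fderiv ℝ (fun u => ρ u * S u) u e) =
      fun u => ρ u * fderiv ℝ S u e + S u * fderiv ℝ ρ u e := by
  ext1 u
  rw [fderiv_fun_mul (hρ.differentiable (by simp) u) (hS.differentiable (by simp) u)]
  rfl

lemma norm_fderiv_mul_le {f g : V → ℝ} {u : V} {α β : ℝ} (hf : DifferentiableAt ℝ f u)
    (hg : DifferentiableAt ℝ g u) (hf0 : ‖f u‖ ≤ α) (hf1 : ‖fderiv ℝ f u‖ ≤ α)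
    (hg0 : ‖g u‖ ≤ β) (hg1 : ‖fderiv ℝ g u‖ ≤ β) :
    ‖fderiv ℝ (fun u => f u * g u) u‖ ≤ 2 * α * β := by
  have hα : 0 ≤ α := (norm_nonneg _).trans hf0
  have hβ : 0 ≤ β := (norm_nonneg _).trans hg0
  rw [fderiv_fun_mul hf hg]
  calc ‖f u • fderiv ℝ g u + g u • fderiv ℝ f u‖ ≤ α * β + β * α :=
        (norm_add_le _ _).trans (by rw [norm_smul, norm_smul]; gcongr)
    _ = 2 * α * β := by ring

lemma fderiv_mul_eventuallyEq_zero (S : V → ℝ) {u : V} (h : ρ =ᶠ[𝓝 u] 0) :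
    fderiv ℝ (fun u => ρ u * S u) =ᶠ[𝓝 u] 0 := by
  have hmul : (fun u => ρ u * S u) =ᶠ[𝓝 u] fun _ => 0 := h.mono fun y hy => by simp [hy]
  exact (hmul.fderiv (𝕜 := ℝ)).trans (.of_eq <| by simp [fderiv_fun_const])

namespace IsCutoff

lemma norm_fderiv_fderiv_apply_le (hρ : IsCutoff R M ρ) (he : ‖e‖ = 1) (u : V) :
    ‖fderiv ℝ (fun u => fderiv ℝ ρ u e) u‖ ≤ M := by
  have hd : DifferentiableAt ℝ (fderiv ℝ ρ) u :=
    (hρ.contDiff.fderiv_right (m := ∞) (by simp)).differentiable (by simp) u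
  rw [fderiv_clm_apply hd (differentiableAt_const _)]
  simpa [he, ContinuousLinearMap.opNorm_flip] using
    ((fderiv ℝ (fderiv ℝ ρ) u).flip.le_opNorm e).trans_eq' (by simp) |>.trans
      (by simpa [he] using hρ.norm_fderiv_fderiv_le u)

lemma norm_fderiv_fderiv_mul_apply_le (hρ : IsCutoff R M ρ) (hR : 0 ≤ R) (he : ‖e‖ = 1)
    (hS : ContDiff ℝ ∞ S) (hbS : C1BoundedBy R ε S)
    (hbS' : C1BoundedBy R ε (fun u => fderiv ℝ S u e)) (u : V) :
    ‖fderiv ℝ (fun u => fderiv ℝ (fun u => ρ u * S u) u e) u‖ ≤ 4 * M * ε := by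
  rcases le_or_gt ‖u‖ R with hu | hu
  · have hdρ := hρ.contDiff.differentiable (by simp) u
    have hdS := hS.differentiable (by simp) u
    have hdρ' := (contDiff_fderiv_apply hρ.contDiff e).differentiable (by simp) u
    have hdS' := (contDiff_fderiv_apply hS e).differentiable (by simp) u
    have hρe : ‖fderiv ℝ ρ u e‖ ≤ M :=
      ((fderiv ℝ ρ u).le_opNorm e).trans (by simpa [he] using hρ.norm_fderiv_le u)
    rw [fderiv_mul_apply hρ.contDiff hS, fderiv_fun_add (hdρ.fun_mul hdS') (hdS.fun_mul hdρ')]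
    calc _ ≤ 2 * M * ε + 2 * ε * M := (norm_add_le _ _).trans (add_le_add
          (norm_fderiv_mul_le hdρ hdS' (hρ.norm_le u) (hρ.norm_fderiv_le u) (hbS' u hu).1
            (hbS' u hu).2)
          (norm_fderiv_mul_le hdS hdρ' (hbS u hu).1 (hbS u hu).2 hρe
            (hρ.norm_fderiv_fderiv_apply_le he u)))
      _ = 4 * M * ε := by ring
  · have hM : 0 ≤ M := (norm_nonneg _).trans (hρ.norm_le 0)
    have hε : 0 ≤ ε := (norm_nonneg _).trans (hbS 0 (by simpa using hR)).1
    have hzero : ρ =ᶠ[𝓝 u] 0 := by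
      filter_upwards [(isOpen_lt continuous_const continuous_norm).mem_nhds hu] using hρ.eq_zero
    have hzero' : (fun u => fderiv ℝ (fun u => ρ u * S u) u e) =ᶠ[𝓝 u] fun _ => 0 :=
      (fderiv_mul_eventuallyEq_zero S hzero).mono fun y hy => by simp [hy]
    rw [hzero'.fderiv_eq, fderiv_fun_const, Pi.zero_apply, norm_zero]
    positivity

lemma exists_volumePreserving (hρ : IsCutoff R M ρ) [FiniteDimensional ℝ V] {e' : V}
    (hR : 0 ≤ R) (he : ‖e‖ = 1) (he' : ‖e'‖ = 1) (hS : ContDiff ℝ ∞ S) (hbS : C1BoundedBy R ε S)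
    (hbSe : C1BoundedBy R ε (fun u => fderiv ℝ S u e))
    (hbSe' : C1BoundedBy R ε (fun u => fderiv ℝ S u e')) (hε : 4 * M * ε ≤ 1 / 2) :
    ∃ h : V → V, ContDiff ℝ ∞ h ∧ (∀ x, (fderiv ℝ h x).det = 1) ∧
      (∀ x, ‖fderiv ℝ h x - 1‖ ≤ 16 * M * ε) ∧ (∀ u, ρ =ᶠ[𝓝 u] 0 → h u = u) ∧
      ∀ u, ρ =ᶠ[𝓝 u] 1 → h (u + fderiv ℝ S u e' • e) = u + fderiv ℝ S u e • e' := by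
  obtain ⟨h, hh, hdet, hclose, hmap⟩ := exists_volumePreserving_of_generatingFunction he he'
    (hρ.contDiff.mul hS) hε (hρ.norm_fderiv_fderiv_mul_apply_le hR he hS hbS hbSe)
    (hρ.norm_fderiv_fderiv_mul_apply_le hR he' hS hbS hbSe')
  refine ⟨h, hh, hdet, fun x => (hclose x).trans_eq (by ring), fun u hu => ?_, fun u hu => ?_⟩
  · simpa [(fderiv_mul_eventuallyEq_zero S hu).eq_of_nhds] using hmap u
  · have hmul : (fun u => ρ u * S u) =ᶠ[𝓝 u] S := hu.mono fun y hy => by simp [hy]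
    simpa only [hmul.fderiv_eq] using hmap u

end IsCutoff

/-- A smooth volume-preserving map `g` that is `δ`-close to the identity in `C¹`, is the identity at
the points near which `ρ` vanishes, and agrees with `f` at the points of `U` around which `ρ` is `1`
up to distance `ε`. -/
structure IsVolumePreservingCutoff (ρ : V → ℝ) (f : V → V) (U : Set V) (ε δ : ℝ) (g : V → V) :
    Prop where
  contDiff : ContDiff ℝ ∞ g
  det_eq_one : ∀ x, (fderiv ℝ g x).det = 1
  norm_fderiv_sub_one_le : ∀ x, ‖fderiv ℝ g x - 1‖ ≤ δ
  eq_self : ∀ x, ρ =ᶠ[𝓝 x] 0 → g x = x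
  eq_map : ∀ x ∈ U, (∀ y, ‖y - x‖ ≤ ε → ρ =ᶠ[𝓝 y] 1) → g x = f x

lemma IsVolumePreservingCutoff.id {f : V → V} {U : Set V} (hf : ∀ x ∈ U, f x = x) :
    IsVolumePreservingCutoff ρ f U ε 0 id where
  contDiff := contDiff_id
  det_eq_one x := by rw [fderiv_id]; exact det_one
  norm_fderiv_sub_one_le x := by rw [fderiv_id]; exact (norm_eq_zero.2 (sub_self _)).le
  eq_self _ _ := rfl
  eq_map x hx _ := (hf x hx).symm

end CutoffGeneratingFunction

section CutoffDecomposition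

variable {V : Type*} [NormedAddCommGroup V] [InnerProductSpace ℝ V] [FiniteDimensional ℝ V]
  {n : ℕ} {ρ S : V → ℝ} {R M r ε δ κ : ℝ} {b : OrthonormalBasis (Fin n) ℝ V} {v g : V → V}

lemma IsVolumePreservingCutoff.exists_succ (hv : IsSmallDisplacement r ε v) {i j : Fin n}
    (hij : (j : ℕ) = i + 1)
    (hg : IsVolumePreservingCutoff ρ (intermediateMap b v i) univ ε δ g) (hρ : IsCutoff R M ρ)
    (hR : 0 ≤ R) (hS : ContDiff ℝ ∞ S) (hSi : ∀ u, fderiv ℝ S u (b i) = correction b v j u)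
    (hSj : ∀ u, fderiv ℝ S u (b j) = succCorrection b v i u) (hbS : C1BoundedBy R κ S)
    (hbi : C1BoundedBy R κ (correction b v j)) (hbj : C1BoundedBy R κ (succCorrection b v i))
    (hκ : 4 * M * κ ≤ 1 / 2) :
    ∃ g', IsVolumePreservingCutoff ρ (intermediateMap b v j) univ ε (16 * M * κ + 3 * δ) g' := by
  rw [← funext hSi] at hbi
  rw [← funext hSj] at hbj
  obtain ⟨h, hh, hdet, hclose, hself, hmap⟩ := hρ.exists_volumePreserving hR (b.norm_eq_one i)
    (b.norm_eq_one j) hS hbS hbi hbj hκ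
  have hδ : 0 ≤ δ := (norm_nonneg _).trans (hg.norm_fderiv_sub_one_le 0)
  have hfderiv : ∀ x, fderiv ℝ (h ∘ g) x = fderiv ℝ h (g x) * fderiv ℝ g x := fun x =>
    fderiv_comp x (hh.differentiable (by simp) _) (hg.contDiff.differentiable (by simp) x)
  refine ⟨h ∘ g, hh.comp hg.contDiff, fun x => ?_, fun x => ?_, fun x hx => ?_, fun x _ hx => ?_⟩
  · rw [hfderiv, det_mul, hdet, hg.det_eq_one, mul_one]
  · rw [hfderiv]
    refine (norm_mul_sub_one_le (hclose _) (hg.norm_fderiv_sub_one_le x)).trans ?_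
    nlinarith
  · rw [Function.comp_apply, hg.eq_self x hx, hself x hx]
  · have hu := hmap _ (hx _ (hv.norm_mixedCoords_sub_le (b := b) (i + 1) x))
    rw [hSi, hSj, ← hv.intermediateMap_eq_succCorrection, ← hij] at hu
    rw [Function.comp_apply, hg.eq_map x (mem_univ x) hx, hu]
    rfl

lemma exists_isVolumePreservingCutoff_intermediateMap (hR : 0 ≤ R) (M : ℝ) {m : ℕ}
    (b : OrthonormalBasis (Fin (m + 1)) ℝ V) (i : Fin (m + 1)) :
    ∃ D : ℝ, ∀ ρ, IsCutoff R M ρ → ∀ r ε v, IsSmallDisplacement r ε v → D * ε ≤ 1 →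
      ∃ g, IsVolumePreservingCutoff ρ (intermediateMap b v i) univ ε (D * ε) g := by
  induction i using Fin.induction with
  | zero =>
    refine ⟨0, fun ρ _ r ε v hv _ => ⟨id, ?_⟩⟩
    rw [zero_mul]
    exact .id fun x _ => hv.intermediateMap_of_val_eq_zero rfl x
  | succ i ih =>
    obtain ⟨D, hD⟩ := ih
    obtain ⟨C, hC⟩ := IsSmallDisplacement.exists_generatingFunction b hR
    refine ⟨16 * M * C + 3 * D, fun ρ hρ r ε v hv hε => ?_⟩
    obtain ⟨S, hS, hSi, hSj, hbS, hbi, hbj⟩ := hC r ε v hv i.castSucc i.succ rfl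
    have hM : 0 ≤ M := (norm_nonneg _).trans (hρ.norm_le 0)
    have hCε : 0 ≤ M * (C * ε) :=
      mul_nonneg hM ((norm_nonneg _).trans (hbS 0 (by simpa using hR)).1)
    obtain ⟨g, hg⟩ := hD ρ hρ r ε v hv (by linarith)
    have hδ : 0 ≤ D * ε := (norm_nonneg _).trans (hg.norm_fderiv_sub_one_le 0)
    obtain ⟨g', hg'⟩ := hg.exists_succ hv rfl hρ hR hS hSi hSj hbS hbi hbj (by linarith)
    exact ⟨g', by convert hg' using 1; ring⟩

lemma exists_isVolumePreservingCutoff (b : OrthonormalBasis (Fin n) ℝ V) (hR : 0 ≤ R) (M : ℝ) :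
    ∃ D : ℝ, ∀ ρ, IsCutoff R M ρ → ∀ r ε v, IsSmallDisplacement r ε v → D * ε ≤ 1 →
      ∃ g, IsVolumePreservingCutoff ρ (fun x : V => x + v x) {x | ‖x‖ + 2 * ε < r} ε (D * ε) g := by
  cases n with
  | zero =>
    have : Subsingleton V := b.repr.toEquiv.subsingleton
    refine ⟨0, fun ρ _ r ε v _ _ => ⟨id, ?_⟩⟩
    rw [zero_mul]
    exact .id fun x _ => Subsingleton.elim _ _
  | succ m =>
    obtain ⟨D, hD⟩ := exists_isVolumePreservingCutoff_intermediateMap hR M b (Fin.last m)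
    refine ⟨D, fun ρ hρ r ε v hv hε => ?_⟩
    obtain ⟨g, hg⟩ := hD ρ hρ r ε v hv hε
    refine ⟨g, { hg with eq_map := fun x hx hx' => ?_ }⟩
    rw [hg.eq_map x (mem_univ x) hx', hv.intermediateMap_of_val_add_one_eq rfl hx]

end CutoffDecomposition

section CutoffAwayFromSet

variable {V F : Type*} [NormedAddCommGroup V] [NormedSpace ℝ V] [NormedAddCommGroup F]
  [NormedSpace ℝ F]

lemma norm_fderiv_fderiv (f : V → F) (x : V) :
    ‖fderiv ℝ (fderiv ℝ f) x‖ = ‖iteratedFDeriv ℝ 2 f x‖ := by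
  rw [← norm_iteratedFDeriv_one, norm_iteratedFDeriv_fderiv]

lemma exists_norm_iteratedFDeriv_le_of_hasCompactSupport {ψ : V → F} (hψ : ContDiff ℝ ∞ ψ)
    (hs : HasCompactSupport ψ) (N : ℕ) :
    ∃ M : ℝ, ∀ n ≤ N, ∀ x, ‖iteratedFDeriv ℝ n ψ x‖ ≤ M := by
  have hb : ∀ n : ℕ, ∃ M : ℝ, ∀ x, ‖iteratedFDeriv ℝ n ψ x‖ ≤ M := fun n =>
    (hs.iteratedFDeriv n).exists_bound_of_continuous
      (hψ.continuous_iteratedFDeriv (m := n) (by exact_mod_cast le_top))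
  choose m hm using hb
  refine ⟨∑ n ∈ Finset.range (N + 1), m n, fun n hn x => (hm n x).trans ?_⟩
  exact Finset.single_le_sum (fun i _ => (norm_nonneg _).trans (hm i 0))
    (Finset.mem_range_succ_iff.2 hn)

lemma IsCutoff.mono {ρ : V → ℝ} {R M M' : ℝ} (h : IsCutoff R M ρ) (hM : M ≤ M') :
    IsCutoff R M' ρ where
  contDiff := h.contDiff
  norm_le x := (h.norm_le x).trans hM
  norm_fderiv_le x := (h.norm_fderiv_le x).trans hM
  norm_fderiv_fderiv_le x := (h.norm_fderiv_fderiv_le x).trans hM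
  eq_zero := h.eq_zero

variable [FiniteDimensional ℝ V]

lemma exists_isCutoff {ρ : V → ℝ} {R : ℝ} (hρ : ContDiff ℝ ∞ ρ) (hR : ∀ x, R < ‖x‖ → ρ x = 0) :
    ∃ M, IsCutoff R M ρ := by
  have hs : HasCompactSupport ρ :=
    .intro (isCompact_closedBall (0 : V) R) fun x hx => hR x (by simpa using hx)
  obtain ⟨M, hM⟩ := exists_norm_iteratedFDeriv_le_of_hasCompactSupport hρ hs 2
  refine ⟨M, hρ, fun x => ?_, fun x => ?_, fun x => ?_, hR⟩
  · simpa using hM 0 (by norm_num) x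
  · simpa using hM 1 (by norm_num) x
  · rw [norm_fderiv_fderiv]
    exact hM 2 le_rfl x

lemma exists_isCutoff_bound_of_finite {ι : Type*} [Finite ι] {ρ : ι → V → ℝ} {R : ℝ}
    (hρ : ∀ i, ContDiff ℝ ∞ (ρ i)) (hR : ∀ i x, R < ‖x‖ → ρ i x = 0) :
    ∃ M, ∀ i, IsCutoff R M (ρ i) := by
  choose m hm using fun i => exists_isCutoff (hρ i) (hR i)
  obtain ⟨M, hM⟩ := Finite.exists_le m
  exact ⟨M, fun i => (hm i).mono (hM i)⟩

variable {out : ContDiffBump (0 : V)} {bump : ∀ w : V, ContDiffBump w} {N : Finset V} {w z : V}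

/-- The cutoff that is `1` on the inner ball of `out`, except around the points `w ∈ N`, where the
bump functions `bump w` carve out holes. -/
noncomputable def holedBump (out : ContDiffBump (0 : V)) (bump : ∀ w : V, ContDiffBump w)
    (N : Finset V) (x : V) : ℝ :=
  out x * ∏ w ∈ N, (1 - bump w x)

lemma contDiff_holedBump (out : ContDiffBump (0 : V)) (bump : ∀ w : V, ContDiffBump w)
    (N : Finset V) : ContDiff ℝ ∞ (holedBump out bump N) :=
  out.contDiff.mul (contDiff_prod fun w _ => contDiff_const.sub (bump w).contDiff)

lemma holedBump_eq_zero (hz : out.rOut < ‖z‖) : holedBump out bump N z = 0 := by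
  rw [holedBump, out.zero_of_le_dist (by simpa using hz.le), zero_mul]

lemma holedBump_eventuallyEq_zero (hw : w ∈ N) (hz : z ∈ ball w (bump w).rIn) :
    holedBump out bump N =ᶠ[𝓝 z] 0 := by
  filter_upwards [(bump w).eventuallyEq_one_of_mem_ball hz] with y hy
  rw [holedBump, Finset.prod_eq_zero hw (by simp [hy]), mul_zero, Pi.zero_apply]

lemma holedBump_eventuallyEq_one (hz : z ∈ ball 0 out.rIn)
    (hN : ∀ w ∈ N, (bump w).rOut < dist z w) : holedBump out bump N =ᶠ[𝓝 z] 1 := by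
  have hfar : ∀ᶠ y in 𝓝 z, ∀ w ∈ N, (bump w).rOut < dist y w :=
    N.eventually_all.2 fun w hw =>
      (continuous_id.dist continuous_const).tendsto z |>.eventually (lt_mem_nhds (hN w hw))
  filter_upwards [out.eventuallyEq_one_of_mem_ball hz, hfar] with y hy hyN
  rw [holedBump, hy, Finset.prod_eq_one, mul_one]
  exact fun w hw => by rw [(bump w).zero_of_le_dist (hyN w hw).le, sub_zero]

/-- The bound `M` does not depend on `Q`, since the holes are centred at a subset of a fixed finite
net of `K`. -/
lemma exists_isCutoff_away_from {K : Set V} (hK : IsCompact K) {R₁ R₂ δ : ℝ} (hR₁ : 0 < R₁)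
    (hR : R₁ < R₂) (hδ : 0 < δ) :
    ∃ M : ℝ, ∀ Q ⊆ K, ∃ ρ, IsCutoff R₂ M ρ ∧ (∀ z ∈ Q, ρ =ᶠ[𝓝 z] 0) ∧
      ∀ y, ‖y‖ < R₁ → δ ≤ infDist y Q → ρ =ᶠ[𝓝 y] 1 := by
  classical
  obtain ⟨t, -, htf, htc⟩ := hK.finite_cover_balls (e := δ / 3) (by positivity)
  lift t to Finset V using htf
  let out : ContDiffBump (0 : V) := ⟨R₁, R₂, hR₁, hR⟩
  let bump : ∀ w : V, ContDiffBump w := fun _ => ⟨δ / 3, 2 * δ / 3, by positivity, by linarith⟩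
  obtain ⟨M, hM⟩ := exists_isCutoff_bound_of_finite
    (fun N : t.powerset => contDiff_holedBump out bump N) fun _ _ hx => holedBump_eq_zero hx
  refine ⟨M, fun Q hQ => ?_⟩
  let N : t.powerset :=
    ⟨t.filter fun w => infDist w Q < δ / 3, Finset.mem_powerset.2 (Finset.filter_subset _ _)⟩
  refine ⟨_, hM N, fun z hz => ?_, fun y hy hyQ => ?_⟩
  · obtain ⟨w, hw, hzw⟩ := mem_iUnion₂.1 (htc (hQ hz))
    have hwQ : infDist w Q < δ / 3 := (infDist_le_dist_of_mem hz).trans_lt (mem_ball'.1 hzw)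
    exact holedBump_eventuallyEq_zero (Finset.mem_filter.2 ⟨hw, hwQ⟩) hzw
  · refine holedBump_eventuallyEq_one (by simpa using hy) fun w hw => ?_
    have hwQ : infDist w Q < δ / 3 := (Finset.mem_filter.1 hw).2
    change 2 * δ / 3 < dist y w
    linarith [infDist_le_infDist_add_dist (s := Q) (x := y) (y := w)]

end CutoffAwayFromSet

section UnimodularNearId

variable {V : Type*} [NormedAddCommGroup V] [NormedSpace ℝ V] {f : V → V}

/-- Near `x` the map `g` is smooth, and its derivative at `x` is `δ`-close to the identity and has
determinant `1`. This local notion is stable under gluing and implies volume preservation. -/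
structure IsUnimodularNearIdAt (δ : ℝ) (g : V → V) (x : V) : Prop where
  contDiffAt : ContDiffAt ℝ ∞ g x
  norm_fderiv_sub_one_le : ‖fderiv ℝ g x - 1‖ ≤ δ
  det_eq_one : (fderiv ℝ g x).det = 1

namespace IsUnimodularNearIdAt

variable {δ : ℝ} {g : V → V} {x : V}

lemma congr (hf : IsUnimodularNearIdAt δ f x) (h : g =ᶠ[𝓝 x] f) : IsUnimodularNearIdAt δ g x where
  contDiffAt := hf.contDiffAt.congr_of_eventuallyEq h
  norm_fderiv_sub_one_le := h.fderiv_eq (𝕜 := ℝ) ▸ hf.norm_fderiv_sub_one_le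
  det_eq_one := h.fderiv_eq (𝕜 := ℝ) ▸ hf.det_eq_one

lemma mono {δ' : ℝ} (hf : IsUnimodularNearIdAt δ f x) (h : δ ≤ δ') :
    IsUnimodularNearIdAt δ' f x :=
  { hf with norm_fderiv_sub_one_le := hf.norm_fderiv_sub_one_le.trans h }

lemma norm_fderiv_sub_fderiv_le (hf : IsUnimodularNearIdAt δ f x)
    (hg : IsUnimodularNearIdAt δ g x) : ‖fderiv ℝ g x - fderiv ℝ f x‖ ≤ 2 * δ := by
  rw [← sub_sub_sub_cancel_right _ _ 1]
  linarith [norm_sub_le (fderiv ℝ g x - 1) (fderiv ℝ f x - 1), hf.norm_fderiv_sub_one_le,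
    hg.norm_fderiv_sub_one_le]

lemma isSmoothDiffeoOn [CompleteSpace V] {U : Set V} (hU : IsOpen U) (hUc : Convex ℝ U) (hδ : δ < 1)
    (hg : ∀ x ∈ U, IsUnimodularNearIdAt δ g x) : IsSmoothDiffeoOn g U :=
  isSmoothDiffeoOn_of_norm_fderiv_sub_one_le hU hUc
    (fun x hx => (hg x hx).contDiffAt.contDiffWithinAt) (Real.toNNReal_lt_one.2 hδ)
    fun x hx => (hg x hx).norm_fderiv_sub_one_le.trans (Real.le_coe_toNNReal δ)

end IsUnimodularNearIdAt

end UnimodularNearId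

section VolumePreservation

variable {V : Type*} [NormedAddCommGroup V] [NormedSpace ℝ V] [FiniteDimensional ℝ V]

lemma det_pos_of_norm_sub_one_lt_one {A : V →L[ℝ] V} (hA : ‖A - 1‖ < 1) : 0 < A.det := by
  have hne : ∀ t ∈ Icc (0 : ℝ) 1, (1 + t • (A - 1)).det ≠ 0 := fun t ht =>
    det_one_add_ne_zero <| calc
      ‖t • (A - 1)‖ = t * ‖A - 1‖ := by rw [norm_smul, Real.norm_of_nonneg ht.1]
      _ ≤ ‖A - 1‖ := mul_le_of_le_one_left (norm_nonneg _) ht.2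
      _ < 1 := hA
  have hcont : Continuous fun t : ℝ => (1 + t • (A - 1)).det :=
    contDiff_det.continuous.comp (by fun_prop)
  by_contra! hneg
  obtain ⟨t, ht, h0⟩ := intermediate_value_Icc' zero_le_one hcont.continuousOn
    (show (0 : ℝ) ∈ Icc _ _ by simpa [det_one] using hneg)
  exact hne t ht h0

variable [MeasurableSpace V] [BorelSpace V] {μ : Measure V} [μ.IsAddHaarMeasure] {f : V → V}
  {U : Set V}

lemma addHaar_image_eq_of_det_fderiv_eq_one {s : Set V} (hs : MeasurableSet s)
    (hf : ∀ x ∈ s, DifferentiableAt ℝ f x) (hinj : InjOn f s)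
    (hdet : ∀ x ∈ s, (fderiv ℝ f x).det = 1) : μ (f '' s) = μ s := by
  rw [← lintegral_abs_det_fderiv_eq_addHaar_image μ hs
    (fun x hx => (hf x hx).hasFDerivAt.hasFDerivWithinAt) hinj,
    setLIntegral_congr_fun (g := fun _ => 1) hs fun x hx => by simp [hdet x hx], setLIntegral_one]

lemma abs_det_fderiv_eq_one_of_addHaar_image_eq (hU : IsOpen U) (hf : ContDiffOn ℝ 1 f U)
    (hinj : InjOn f U) (hμ : ∀ s ⊆ U, MeasurableSet s → μ (f '' s) = μ s) :
    ∀ x ∈ U, |(fderiv ℝ f x).det| = 1 := by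
  have hcont : ContinuousOn (fun x => ENNReal.ofReal |(fderiv ℝ f x).det|) U :=
    ENNReal.continuous_ofReal.comp_continuousOn
      (contDiff_det.continuous.comp_continuousOn (hf.continuousOn_fderiv_of_isOpen hU le_rfl)).abs
  have hae : (fun x => ENNReal.ofReal |(fderiv ℝ f x).det|) =ᵐ[μ.restrict U] fun _ => 1 := by
    refine ae_eq_of_forall_setLIntegral_eq_of_sigmaFinite₀
      (hcont.aemeasurable hU.measurableSet) aemeasurable_const fun s hs _ => ?_
    have hsU : MeasurableSet (s ∩ U) := hs.inter hU.measurableSet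
    have hfd : ∀ x ∈ s ∩ U, HasFDerivWithinAt f (fderiv ℝ f x) (s ∩ U) x := fun x hx =>
      ((hf.differentiableOn one_ne_zero).hasFDerivAt (hU.mem_nhds hx.2)).hasFDerivWithinAt
    rw [Measure.restrict_restrict hs, setLIntegral_one,
      lintegral_abs_det_fderiv_eq_addHaar_image μ hsU hfd (hinj.mono inter_subset_right),
      hμ _ inter_subset_right hsU]
  intro x hx
  simpa using Measure.eqOn_open_of_ae_eq hae hU hcont continuousOn_const hx

namespace IsUnimodularNearIdAt

variable {δ : ℝ} {g : V → V}

lemma addHaar_image_eq (hg : ∀ x ∈ U, IsUnimodularNearIdAt δ g x) (hinj : InjOn g U) {s : Set V}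
    (hsU : s ⊆ U) (hs : MeasurableSet s) : μ (g '' s) = μ s :=
  addHaar_image_eq_of_det_fderiv_eq_one hs
    (fun x hx => (hg x (hsU hx)).contDiffAt.differentiableAt (by simp)) (hinj.mono hsU)
    fun x hx => (hg x (hsU hx)).det_eq_one

lemma of_addHaar_image_eq (hU : IsOpen U) (hUc : Convex ℝ U) (hδ : δ < 1)
    (hf : ContDiffOn ℝ ∞ f U) (hμ : ∀ s ⊆ U, MeasurableSet s → μ (f '' s) = μ s)
    (hfδ : ∀ x ∈ U, ‖fderiv ℝ f x - 1‖ ≤ δ) : ∀ x ∈ U, IsUnimodularNearIdAt δ f x := by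
  have hinj : InjOn f U := (isSmoothDiffeoOn_of_norm_fderiv_sub_one_le hU hUc hf
    (Real.toNNReal_lt_one.2 hδ) fun x hx => (hfδ x hx).trans (Real.le_coe_toNNReal δ)).injOn
  refine fun x hx => ⟨hf.contDiffAt (hU.mem_nhds hx), hfδ x hx, ?_⟩
  rw [← abs_of_pos (det_pos_of_norm_sub_one_lt_one ((hfδ x hx).trans_lt hδ))]
  exact abs_det_fderiv_eq_one_of_addHaar_image_eq hU (hf.of_le (by simp)) hinj hμ x hx

end IsUnimodularNearIdAt

end VolumePreservation

section Displacement

variable {V F : Type*} [NormedAddCommGroup V] [NormedSpace ℝ V] [NormedAddCommGroup F]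
  [NormedSpace ℝ F] {ψ : V → ℝ} {w : V → F} {U : Set V}

lemma contDiff_smul_of_tsupport_subset (hU : IsOpen U) (hψ : ContDiff ℝ ∞ ψ)
    (hw : ContDiffOn ℝ ∞ w U) (hψU : tsupport ψ ⊆ U) : ContDiff ℝ ∞ fun x => ψ x • w x :=
  contMDiff_iff_contDiff.1 <| contMDiff_of_tsupport fun _ hx => contMDiffAt_iff_contDiffAt.2 <|
    hψ.contDiffAt.smul <|
      hw.contDiffAt <| hU.mem_nhds <| hψU <| tsupport_smul_subset_left ψ w hx

lemma norm_iteratedFDeriv_smul_le_of_tsupport_subset (hU : IsOpen U) (hψ : ContDiff ℝ ∞ ψ)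
    (hw : ContDiffOn ℝ ∞ w U) (hψU : tsupport ψ ⊆ U) {N : ℕ} {B ε : ℝ} (hε : 0 ≤ ε)
    (hψB : ∀ n ≤ N, ∀ x, ‖iteratedFDeriv ℝ n ψ x‖ ≤ B)
    (hwε : ∀ n ≤ N, ∀ x ∈ U, ‖iteratedFDeriv ℝ n w x‖ ≤ ε) {n : ℕ} (hn : n ≤ N) (x : V) :
    ‖iteratedFDeriv ℝ n (fun x => ψ x • w x) x‖ ≤ 2 ^ N * (B * ε) := by
  have hB : 0 ≤ B := (norm_nonneg _).trans (hψB n hn x)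
  by_cases hx : x ∈ U
  · have hLeibniz := norm_iteratedFDerivWithin_smul_le hψ.contDiffOn hw hU.uniqueDiffOn hx
      (n := n) (by exact_mod_cast le_top)
    simp only [iteratedFDerivWithin_of_isOpen _ hU hx] at hLeibniz
    calc _ ≤ _ := hLeibniz
      _ ≤ ∑ i ∈ Finset.range (n + 1), (n.choose i : ℝ) * (B * ε) := by
        refine Finset.sum_le_sum fun i hi => ?_
        rw [mul_assoc]
        gcongr
        · exact hψB i ((Finset.mem_range_succ_iff.1 hi).trans hn) x
        · exact hwε (n - i) ((n.sub_le i).trans hn) x hx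
      _ = 2 ^ n * (B * ε) := by
        rw [← Finset.sum_mul]
        exact_mod_cast congrArg (fun k : ℕ => (k : ℝ) * (B * ε)) (Nat.sum_range_choose n)
      _ ≤ 2 ^ N * (B * ε) := by gcongr; norm_num
  · have hx0 : iteratedFDeriv ℝ n (fun x => ψ x • w x) x = 0 := image_eq_zero_of_notMem_tsupport
      fun h => hx (hψU (tsupport_smul_subset_left ψ w (tsupport_iteratedFDeriv_subset n h)))
    rw [hx0, norm_zero]
    positivity

lemma exists_contDiff_extension_of_closedBall [FiniteDimensional ℝ V] {r R : ℝ} (hr : 0 < r)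
    (hrR : r < R) (N : ℕ) :
    ∃ A, 0 ≤ A ∧ ∀ (w : V → F) (ε : ℝ), ContDiffOn ℝ ∞ w (ball 0 R) →
      (∀ n ≤ N, ∀ x ∈ ball (0 : V) R, ‖iteratedFDeriv ℝ n w x‖ ≤ ε) →
      ∃ v : V → F, ContDiff ℝ ∞ v ∧ (∀ n ≤ N, ∀ x, ‖iteratedFDeriv ℝ n v x‖ ≤ A * ε) ∧
        ∀ x, ‖x‖ ≤ r → v x = w x := by
  let ψ : ContDiffBump (0 : V) := ⟨r, (r + R) / 2, hr, by linarith⟩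
  have hψR : tsupport ψ ⊆ ball 0 R := by
    rw [ψ.tsupport_eq]
    exact closedBall_subset_ball (show (r + R) / 2 < R by linarith)
  obtain ⟨B, hB⟩ :=
    exists_norm_iteratedFDeriv_le_of_hasCompactSupport ψ.contDiff ψ.hasCompactSupport N
  have hB0 : 0 ≤ B := (norm_nonneg _).trans (hB 0 N.zero_le 0)
  refine ⟨2 ^ N * B, by positivity, fun w ε hw hwε => ⟨fun x => ψ x • w x, ?_, ?_, ?_⟩⟩
  · exact contDiff_smul_of_tsupport_subset isOpen_ball ψ.contDiff hw hψR
  · intro n hn x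
    have hε : 0 ≤ ε := (norm_nonneg _).trans (hwε 0 N.zero_le 0 (mem_ball_self (hr.trans hrR)))
    rw [mul_assoc]
    exact norm_iteratedFDeriv_smul_le_of_tsupport_subset isOpen_ball ψ.contDiff hw hψR hε hB hwε
      hn x
  · intro x hx
    simp only [ψ.one_of_mem_closedBall (mem_closedBall_zero_iff.2 hx), one_smul]

variable {f : V → V} {R η : ℝ} {x : V}

/-- The displacement of `f` from the identity, normalized by a translation to vanish at `0`. -/
def displacement (f : V → V) (x : V) : V :=
  f x - f 0 - x

lemma hasFDerivAt_displacement (hf : DifferentiableAt ℝ f x) :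
    HasFDerivAt (displacement f) (fderiv ℝ f x - 1) x :=
  (hf.hasFDerivAt.sub_const (f 0)).sub (hasFDerivAt_id x)

lemma norm_displacement_le (hf : ∀ x ∈ ball (0 : V) R, DifferentiableAt ℝ f x)
    (h1 : ∀ x ∈ ball (0 : V) R, ‖fderiv ℝ f x - 1‖ ≤ η) (hx : x ∈ ball 0 R) :
    ‖displacement f x‖ ≤ R * η := by
  have h0 : (0 : V) ∈ ball (0 : V) R := mem_ball_self (pos_of_mem_ball hx)
  calc ‖displacement f x‖ = ‖displacement f x - displacement f 0‖ := by
        simp [displacement]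
    _ ≤ η * ‖x - 0‖ := (convex_ball (0 : V) R).norm_image_sub_le_of_norm_hasFDerivWithin_le
        (fun y hy => (hasFDerivAt_displacement (hf y hy)).hasFDerivWithinAt) h1 h0 hx
    _ ≤ R * η := by
        have hη : 0 ≤ η := (norm_nonneg _).trans (h1 0 h0)
        rw [sub_zero, mul_comm]
        gcongr
        exact (mem_ball_zero_iff.1 hx).le

lemma norm_iteratedFDeriv_displacement_le (hf : ContDiffOn ℝ ∞ f (ball 0 R))
    (h1 : ∀ x ∈ ball (0 : V) R, ‖fderiv ℝ f x - 1‖ ≤ η)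
    (h2 : ∀ x ∈ ball (0 : V) R, ‖iteratedFDeriv ℝ 2 f x‖ ≤ η) (hx : x ∈ ball 0 R) {n : ℕ}
    (hn : n ≤ 2) : ‖iteratedFDeriv ℝ n (displacement f) x‖ ≤ (R + 1) * η := by
  have hfd : ∀ x ∈ ball (0 : V) R, DifferentiableAt ℝ f x := fun x hx =>
    (hf.differentiableOn (by simp)).differentiableAt (isOpen_ball.mem_nhds hx)
  have hη : 0 ≤ η := (norm_nonneg _).trans (h1 x hx)
  have hR : 0 ≤ R := (pos_of_mem_ball hx).le
  have hle : η ≤ (R + 1) * η := by nlinarith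
  interval_cases n
  · rw [norm_iteratedFDeriv_zero]
    exact (norm_displacement_le hfd h1 hx).trans (by linarith)
  · rw [norm_iteratedFDeriv_one, (hasFDerivAt_displacement (hfd x hx)).fderiv]
    exact (h1 x hx).trans hle
  · have hfderiv : fderiv ℝ (displacement f) =ᶠ[𝓝 x] fun x => fderiv ℝ f x - 1 := by
      filter_upwards [isOpen_ball.mem_nhds hx] with y hy
        using (hasFDerivAt_displacement (hfd y hy)).fderiv
    rw [← norm_fderiv_fderiv, hfderiv.fderiv_eq, fderiv_sub_const, norm_fderiv_fderiv]
    exact (h2 x hx).trans hle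

lemma one_add_fderiv_eq_of_eventuallyEq_displacement {v : V → V} (h : v =ᶠ[𝓝 x] displacement f)
    (hf : DifferentiableAt ℝ f x) : 1 + fderiv ℝ v x = fderiv ℝ f x := by
  rw [h.fderiv_eq, (hasFDerivAt_displacement hf).fderiv, add_sub_cancel]

lemma exists_isSmallDisplacement [FiniteDimensional ℝ V] {r : ℝ} (hr : 0 < r) (hrR : r < R) :
    ∃ A, 0 ≤ A ∧ ∀ (f : V → V) (η : ℝ), ContDiffOn ℝ ∞ f (ball 0 R) →
      (∀ x ∈ ball (0 : V) R, ‖fderiv ℝ f x - 1‖ ≤ η) →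
      (∀ x ∈ ball (0 : V) R, ‖iteratedFDeriv ℝ 2 f x‖ ≤ η) →
      (∀ x ∈ ball (0 : V) R, (fderiv ℝ f x).det = 1) → A * η ≤ 1 / 2 →
      ∃ v, IsSmallDisplacement r (A * η) v ∧ ∀ x, ‖x‖ ≤ r → f 0 + (x + v x) = f x := by
  obtain ⟨A, hA, hext⟩ := exists_contDiff_extension_of_closedBall (V := V) (F := V) hr hrR 2
  refine ⟨A * (R + 1), mul_nonneg hA (by linarith), fun f η hf h1 h2 hdet hη => ?_⟩
  have hfd : ∀ x ∈ ball (0 : V) R, DifferentiableAt ℝ f x := fun x hx =>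
    (hf.differentiableOn (by simp)).differentiableAt (isOpen_ball.mem_nhds hx)
  obtain ⟨v, hv, hvA, hvf⟩ := hext (displacement f) ((R + 1) * η)
    ((hf.sub contDiffOn_const).sub contDiffOn_id)
    fun n hn x hx => norm_iteratedFDeriv_displacement_le hf h1 h2 hx hn
  simp only [← mul_assoc] at hvA
  refine ⟨v, ⟨hv, hη, fun x => by simpa using hvA 0 zero_le_two x,
    fun x => by simpa using hvA 1 one_le_two x, fun x => ?_, ?_, fun x hx => ?_⟩, fun x hx => ?_⟩
  · rw [norm_fderiv_fderiv]
    exact hvA 2 le_rfl x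
  · rw [hvf 0 (by simpa using hr.le)]
    simp [displacement]
  · have hx' : x ∈ ball 0 R := mem_ball_zero_iff.2 (hx.trans hrR)
    rw [one_add_fderiv_eq_of_eventuallyEq_displacement _ (hfd x hx'), hdet x hx']
    filter_upwards [(isOpen_lt continuous_norm continuous_const).mem_nhds hx] with y hy
      using hvf y hy.le
  · rw [hvf x hx, displacement]
    abel

end Displacement

section Gluing

lemma exists_eventuallyEq_of_eqOn_inter {X Y : Type*} [TopologicalSpace X] {s t : Set X}
    {f g : X → Y} (hs : IsOpen s) (ht : IsOpen t) (h : EqOn f g (s ∩ t)) :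
    ∃ F : X → Y, (∀ x ∈ s, F =ᶠ[𝓝 x] f) ∧ ∀ x ∈ t, F =ᶠ[𝓝 x] g := by
  classical
  refine ⟨s.piecewise f g, fun x hx => ?_, fun x hx => ?_⟩
  · filter_upwards [hs.mem_nhds hx] with y hy using piecewise_eq_of_mem s f g hy
  · filter_upwards [ht.mem_nhds hx] with y hy
    by_cases hys : y ∈ s
    · rw [piecewise_eq_of_mem s f g hys, h ⟨hys, hy⟩]
    · exact piecewise_eq_of_notMem s f g hys

variable {V : Type*} [NormedAddCommGroup V] {Q : Set V} {R χ : ℝ}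

lemma le_infDist_of_subset_closedBall (hQ : Q.Nonempty) (hQR : Q ⊆ closedBall 0 R) {x : V}
    (hx : R + χ ≤ ‖x‖) : χ ≤ infDist x Q := by
  refine (le_infDist hQ).2 fun y hy => ?_
  have hy' : ‖y‖ ≤ R := mem_closedBall_zero_iff.1 (hQR hy)
  rw [dist_eq_norm]
  linarith [norm_sub_norm_le x y]

lemma exists_eventuallyEq_of_forall_le_infDist {f G : V → V} {r : ℝ} (hQ : Q.Nonempty)
    (hQR : Q ⊆ closedBall 0 R) (h : ∀ x, ‖x‖ < r → χ ≤ infDist x Q → G x = f x) :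
    ∃ g : V → V, (∀ x, ‖x‖ < r → g =ᶠ[𝓝 x] G) ∧ ∀ x, R + χ < ‖x‖ → g =ᶠ[𝓝 x] f :=
  exists_eventuallyEq_of_eqOn_inter (isOpen_lt continuous_norm continuous_const)
    (isOpen_lt continuous_const continuous_norm) fun x hx =>
      h x hx.1 (le_infDist_of_subset_closedBall hQ hQR (le_of_lt hx.2))

variable [NormedSpace ℝ V]

lemma IsVolumePreservingCutoff.eq_of_le_infDist {ρ : V → ℝ} {f g : V → V}
    {r s ε δ : ℝ} (hg : IsVolumePreservingCutoff ρ f {x | ‖x‖ + 2 * ε < r} ε δ g)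
    (hρ : ∀ y, ‖y‖ < s + 1 → χ / 2 ≤ infDist y Q → ρ =ᶠ[𝓝 y] 1) (hε : ε ≤ 1) (hεχ : ε ≤ χ / 2)
    (hεr : s + 2 * ε ≤ r) {x : V} (hx : ‖x‖ < s) (hxQ : χ ≤ infDist x Q) : g x = f x := by
  refine hg.eq_map x (show ‖x‖ + 2 * ε < r by linarith) fun y hy => hρ y ?_ ?_
  · linarith [norm_le_norm_add_norm_sub' y x]
  · linarith [infDist_le_infDist_add_dist (s := Q) (x := x) (y := y), dist_eq_norm' x y]

end Gluing

section Linearization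

variable {V : Type*} [NormedAddCommGroup V] [InnerProductSpace ℝ V] [FiniteDimensional ℝ V]

lemma exists_volumePreserving_eq_id_on {K : Set V} (hK : IsCompact K) {s R χ δ : ℝ} (hs : 0 < s)
    (hsR : s < R) (hχ : 0 < χ) (hδ : 0 < δ) :
    ∃ η : ℝ, 0 < η ∧ ∀ Q ⊆ K, ∀ f : V → V, ContDiffOn ℝ ∞ f (ball 0 R) →
      (∀ x ∈ ball (0 : V) R, ‖fderiv ℝ f x - 1‖ ≤ η) →
      (∀ x ∈ ball (0 : V) R, ‖iteratedFDeriv ℝ 2 f x‖ ≤ η) →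
      (∀ x ∈ ball (0 : V) R, (fderiv ℝ f x).det = 1) →
      ∃ G : V → V, ContDiff ℝ ∞ G ∧ (∀ x, (fderiv ℝ G x).det = 1) ∧
        (∀ x, ‖fderiv ℝ G x - 1‖ ≤ δ) ∧ (∀ z ∈ Q, G z = z) ∧
        ∀ x, ‖x‖ < s → χ ≤ infDist x Q → f 0 + G x = f x := by
  obtain ⟨M, hM⟩ := exists_isCutoff_away_from hK (R₁ := s + 1) (R₂ := s + 2) (by positivity)
    (by linarith) (half_pos hχ)
  obtain ⟨D, hD⟩ := exists_isVolumePreservingCutoff (stdOrthonormalBasis ℝ V)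
    (R := s + 2) (by positivity) M
  obtain ⟨A, hA, hAv⟩ := exists_isSmallDisplacement (V := V) (r := (s + R) / 2) (R := R)
    (by linarith) (by linarith)
  let m := min (1 / 2) (min (χ / 2) (min ((R - s) / 4) δ))
  have hm : 0 < m := by simp only [m, lt_min_iff]; exact ⟨by norm_num, half_pos hχ, by linarith, hδ⟩
  obtain ⟨η, hη, hηm⟩ := exists_pos_mul_lt hm (max 1 D * A)
  have hηm' : max 1 D * (A * η) ≤ m := by linarith
  have hAη : 0 ≤ A * η := by positivity
  have hAηm : A * η ≤ m := (le_mul_of_one_le_left hAη (le_max_left 1 D)).trans hηm'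
  have hDm : D * (A * η) ≤ m := (mul_le_mul_of_nonneg_right (le_max_right 1 D) hAη).trans hηm'
  simp only [m, le_min_iff] at hAηm hDm
  refine ⟨η, hη, fun Q hQ f hf h1 h2 hdet => ?_⟩
  obtain ⟨v, hv, hvf⟩ := hAv f η hf h1 h2 hdet hAηm.1
  obtain ⟨ρ, hρ, hρ0, hρ1⟩ := hM Q hQ
  obtain ⟨G, hG⟩ := hD ρ hρ _ _ v hv (by linarith)
  refine ⟨G, hG.contDiff, hG.det_eq_one, fun x => (hG.norm_fderiv_sub_one_le x).trans hDm.2.2.2,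
    fun z hz => hG.eq_self z (hρ0 z hz), fun x hx hxQ => ?_⟩
  rw [hG.eq_of_le_infDist hρ1 (by linarith) hAηm.2.1 (by linarith) hx hxQ, hvf x (by linarith)]

end Linearization

section Assembly

variable {V : Type*} [NormedAddCommGroup V] [InnerProductSpace ℝ V] [FiniteDimensional ℝ V]

lemma exists_isUnimodularNearIdAt_eq_add_const_on {χ δ : ℝ} (hχ : 0 < χ) (hδ : 0 < δ) {s R : ℝ}
    (hs : 0 ≤ s) (hR : s + χ < R) :
    ∃ η : ℝ, 0 < η ∧ ∀ Q ⊆ closedBall (0 : V) s, Q.Nonempty → ∀ f : V → V,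
      (∀ x ∈ ball 0 R, IsUnimodularNearIdAt (min η δ) f x) →
      (∀ x ∈ ball (0 : V) R, ‖iteratedFDeriv ℝ 2 f x‖ ≤ η) →
      ∃ b : V, ∃ g : V → V, (∀ x ∈ ball 0 R, IsUnimodularNearIdAt δ g x) ∧
        (∀ x, χ ≤ infDist x Q → g x = f x) ∧ ∀ z ∈ Q, g z = z + b := by
  obtain ⟨r, hr, hrR⟩ := exists_between hR
  obtain ⟨η, hη, hη'⟩ := exists_volumePreserving_eq_id_on (isCompact_closedBall (0 : V) s)
    (s := r) (R := R) (by linarith) hrR hχ hδ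
  refine ⟨η, hη, fun Q hQs hQ f hf h2 => ?_⟩
  obtain ⟨G, hG, hGdet, hGδ, hGQ, hGf⟩ := hη' Q hQs f
    (fun x hx => (hf x hx).contDiffAt.contDiffWithinAt)
    (fun x hx => (hf x hx).norm_fderiv_sub_one_le.trans (min_le_left _ _)) h2
    fun x hx => (hf x hx).det_eq_one
  have hGu : ∀ x, IsUnimodularNearIdAt δ (fun x => f 0 + G x) x := fun x =>
    ⟨(contDiff_const.add hG).contDiffAt, by rw [fderiv_const_add]; exact hGδ x,
      by rw [fderiv_const_add]; exact hGdet x⟩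
  obtain ⟨g, hgG, hgf⟩ := exists_eventuallyEq_of_forall_le_infDist hQ hQs hGf
  refine ⟨f 0, g, fun x hx => ?_, fun x hxQ => ?_, fun z hz => ?_⟩
  · rcases lt_or_ge ‖x‖ r with hxr | hxr
    · exact (hGu x).congr (hgG x hxr)
    · exact ((hf x hx).mono (min_le_right _ _)).congr (hgf x (hr.trans_le hxr))
  · rcases lt_or_ge ‖x‖ r with hxr | hxr
    · rw [(hgG x hxr).eq_of_nhds, hGf x hxr hxQ]
    · exact (hgf x (hr.trans_le hxr)).eq_of_nhds
  · have hzr : ‖z‖ < r := (mem_closedBall_zero_iff.1 (hQs hz)).trans_lt (by linarith)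
    rw [(hgG z hzr).eq_of_nhds, hGQ z hz, add_comm]

end Assembly

end LocalLinearization

open LocalLinearization in
theorem local_linearization_to_translation_volume_preserving_general {V : Type*}
    [NormedAddCommGroup V] [InnerProductSpace ℝ V] [FiniteDimensional ℝ V] [MeasurableSpace V]
    [BorelSpace V] (μ : Measure V) [μ.IsAddHaarMeasure] (θ χ' : ℝ) (hθ : 0 < θ) (hχ' : 0 < χ') :
    ∃ η : ℝ, 0 < η ∧ ∀ Q ⊆ closedBall (0 : V) 1, Q.Nonempty → ∀ f : V → V,
      ContDiffOn ℝ (⊤ : ℕ∞) f (ball 0 2) →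
      (∀ s ⊆ ball 0 2, MeasurableSet s → μ (f '' s) = μ s) →
      (∀ x ∈ ball (0 : V) 2, ‖fderiv ℝ f x - ContinuousLinearMap.id ℝ V‖ < η) →
      (∀ x ∈ ball (0 : V) 2, ‖iteratedFDeriv ℝ 2 f x‖ ≤ η) →
      ∃ b : V, ∃ g : V → V, IsSmoothDiffeoOn g (ball 0 2) ∧
        (∀ s ⊆ ball 0 2, MeasurableSet s → μ (g '' s) = μ s) ∧
        (∀ x ∈ ball 0 2, χ' ≤ infDist x Q → g x = f x) ∧ (∀ z ∈ Q, g z = z + b) ∧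
        ∀ x ∈ ball (0 : V) 2, ‖fderiv ℝ g x - fderiv ℝ f x‖ ≤ θ := by
  let δ := min (θ / 2) (1 / 2)
  have hδ : 0 < δ := lt_min (half_pos hθ) one_half_pos
  have hδ1 : δ < 1 := (min_le_right _ _).trans_lt one_half_lt_one
  obtain ⟨η, hη, hη'⟩ := exists_isUnimodularNearIdAt_eq_add_const_on (V := V)
    (χ := min χ' (1 / 2)) (lt_min hχ' one_half_pos) hδ zero_le_one (R := 2)
    (by linarith [min_le_right χ' (1 / 2)])
  refine ⟨min η δ, lt_min hη hδ, fun Q hQ1 hQ f hf hμ h1 h2 => ?_⟩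
  have hf' := IsUnimodularNearIdAt.of_addHaar_image_eq isOpen_ball (convex_ball 0 2)
    ((min_le_right _ _).trans_lt hδ1) hf hμ fun x hx => (h1 x hx).le
  obtain ⟨b, g, hg, hgf, hgQ⟩ :=
    hη' Q hQ1 hQ f hf' fun x hx => (h2 x hx).trans (min_le_left _ _)
  have hdiffeo := IsUnimodularNearIdAt.isSmoothDiffeoOn isOpen_ball (convex_ball 0 2) hδ1 hg
  refine ⟨b, g, hdiffeo,
    fun s hs hsm => IsUnimodularNearIdAt.addHaar_image_eq hg hdiffeo.injOn hs hsm,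
    fun x _ hxQ => hgf x ((min_le_left _ _).trans hxQ), hgQ, fun x hx => ?_⟩
  have hfx := (hf' x hx).mono (min_le_right _ _)
  linarith [hfx.norm_fderiv_sub_fderiv_le (hg x hx), min_le_left (θ / 2) (1 / 2)]

/-- **Local linearization lemma (volume-preserving case).**  For every `d ≥ 1` and
`θ, χ′ > 0` there is `η > 0` such that: if `Q` is a compact subset of the closed unit ball
of `ℝ^d`, homeomorphic to the closed unit ball and of diameter `1`, and `f : B(0,2) → ℝ^d` is
a `C^∞` diffeomorphism onto its image preserving Lebesgue measure with `‖Df − Id‖ < η` and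
`‖D²f‖ ≤ η` on `B(0,2)`, then there is a volume-preserving `C^∞` diffeomorphism onto its
image `g : B(0,2) → ℝ^d` coinciding with `f` at distance `≥ χ′` from `Q`, equal to a
translation `z ↦ z + b` on `Q`, with `‖Dg − Df‖ ≤ θ` on `B(0,2)`. -/
theorem local_linearization_to_translation_volume_preserving
    (d : ℕ) (hd : 1 ≤ d) (θ χ' : ℝ) (hθ : 0 < θ) (hχ' : 0 < χ') :
    ∃ η : ℝ, 0 < η ∧
      ∀ Q : Set (EuclideanSpace ℝ (Fin d)),
        IsCompact Q → Q ⊆ closedBall (0 : EuclideanSpace ℝ (Fin d)) 1 →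
        Nonempty (Q ≃ₜ (closedBall (0 : EuclideanSpace ℝ (Fin d)) 1 :
          Set (EuclideanSpace ℝ (Fin d)))) →
        Metric.diam Q = 1 →
        ∀ f : EuclideanSpace ℝ (Fin d) → EuclideanSpace ℝ (Fin d),
          ContDiffOn ℝ (⊤ : ℕ∞) f (ball (0 : EuclideanSpace ℝ (Fin d)) 2) →
          Set.InjOn f (ball (0 : EuclideanSpace ℝ (Fin d)) 2) →
          IsOpen (f '' ball (0 : EuclideanSpace ℝ (Fin d)) 2) →
          (∃ finv, ContDiffOn ℝ (⊤ : ℕ∞) finv (f '' ball (0 : EuclideanSpace ℝ (Fin d)) 2) ∧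
            ∀ x ∈ ball (0 : EuclideanSpace ℝ (Fin d)) 2, finv (f x) = x) →
          (∀ s ⊆ ball (0 : EuclideanSpace ℝ (Fin d)) 2, MeasurableSet s →
            volume (f '' s) = volume s) →
          (∀ x ∈ ball (0 : EuclideanSpace ℝ (Fin d)) 2,
            ‖fderiv ℝ f x - ContinuousLinearMap.id ℝ (EuclideanSpace ℝ (Fin d))‖ < η) →
          (∀ x ∈ ball (0 : EuclideanSpace ℝ (Fin d)) 2,
            ‖iteratedFDeriv ℝ 2 f x‖ ≤ η) →
          ∃ b : EuclideanSpace ℝ (Fin d),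
          ∃ g : EuclideanSpace ℝ (Fin d) → EuclideanSpace ℝ (Fin d),
            ContDiffOn ℝ (⊤ : ℕ∞) g (ball (0 : EuclideanSpace ℝ (Fin d)) 2) ∧
            Set.InjOn g (ball (0 : EuclideanSpace ℝ (Fin d)) 2) ∧
            IsOpen (g '' ball (0 : EuclideanSpace ℝ (Fin d)) 2) ∧
            (∃ ginv, ContDiffOn ℝ (⊤ : ℕ∞) ginv (g '' ball (0 : EuclideanSpace ℝ (Fin d)) 2) ∧
              ∀ x ∈ ball (0 : EuclideanSpace ℝ (Fin d)) 2, ginv (g x) = x) ∧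
            (∀ s ⊆ ball (0 : EuclideanSpace ℝ (Fin d)) 2, MeasurableSet s →
              volume (g '' s) = volume s) ∧
            (∀ x ∈ ball (0 : EuclideanSpace ℝ (Fin d)) 2,
              χ' ≤ infDist x Q → g x = f x) ∧
            (∀ z ∈ Q, g z = z + b) ∧
            (∀ x ∈ ball (0 : EuclideanSpace ℝ (Fin d)) 2,
              ‖fderiv ℝ g x - fderiv ℝ f x‖ ≤ θ) := by
  obtain ⟨η, hη, hη'⟩ := local_linearization_to_translation_volume_preserving_general
    (volume : Measure (EuclideanSpace ℝ (Fin d))) θ χ' hθ hχ'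
  refine ⟨η, hη, fun Q _ hQ _ hdiam f hf _ _ _ hμ h1 h2 => ?_⟩
  have hQ0 : Q.Nonempty := Set.nonempty_iff_ne_empty.2 fun h => by simp [h] at hdiam
  obtain ⟨b, g, hg, hrest⟩ := hη' Q hQ hQ0 f hf hμ h1 h2
  exact ⟨b, g, hg.contDiffOn, hg.injOn, hg.isOpen_image, hg.exists_inverse, hrest⟩
end

section
/- Let d ≥ 1, let f : B(0,2) → ℝ^d be a C^∞ map that is a diffeomorphism onto its image, and let θ > 0, χ′ > 0. Then there exist ρ > 0 and η > 0 with the following property. For every compact subset Q of the open unit ball B(0,1) that is homeomorphic to the closed unit ball of ℝ^d and has diameter in (0, ρ), and every A ∈ GL(d,ℝ) such that ‖A − Df(x₀)‖ < η for some x₀ ∈ Q, there exist b ∈ ℝ^d and a C^∞ map g : B(0,2) → ℝ^d that is a diffeomorphism onto its image such that: g(x) = f(x) for every x ∈ B(0,2) whose distance to Q is at least χ′·diam(Q); g(z) = A·z + b for every z ∈ Q; and ‖Dg(x) − Df(x)‖ ≤ θ for all x ∈ B(0,2). -/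
open Metric

/-!
Let `δ = diam Q`, let `h z = A z + (f x₀ - A x₀) - f z` be the error of the affine approximation
of `f` at `x₀ ∈ Q`, and set `g = f + φ • h`, where `φ` is a smooth cutoff equal to `1` on `Q`,
supported at distance at most `χ δ ≤ δ` from `Q`, with `‖Dφ‖ ≤ 3 / (χ δ)`. On the ball of radius
`2 δ` around `x₀`, uniform continuity of `Df` gives `‖Dh‖ ≤ ε` with `ε` as small as desired, hence
`‖h‖ ≤ 2 ε δ` because `h x₀ = 0`. The product rule yields `‖D(φ • h)‖ ≤ ε (1 + 6 / χ)`: the factors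
`δ` cancel, so the perturbation `φ • h` is `C¹`-small uniformly in `Q`.

A `C¹`-small perturbation `P` supported in a fixed compact set `K` leaves `f` a diffeomorphism onto
its image. The derivative stays invertible, since invertibility is an open condition and `Df '' K`
is compact. The map stays injective: `f⁻¹` is `C`-Lipschitz near `f '' K` for some `C`, so if
`f x + P x = f y + P y` with `x ∈ K`, then
`dist x y ≤ C * dist (P x) (P y) ≤ C / (C + 1) * dist x y` and `x = y`.
-/

open Set Function
open scoped NNReal Topology ContDiff

section Diffeomorphism

variable {E F : Type*} [NormedAddCommGroup E] [NormedSpace ℝ E] [NormedAddCommGroup F]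
  [NormedSpace ℝ F] {n : WithTop ℕ∞} {f : E → F} {U K : Set E}

/-- `f` restricts to a `C^n` diffeomorphism from the open set `U` onto an open image. The inverse is
recorded as a map on all of `F`, of which only the values on `f '' U` matter. -/
structure IsDiffeoOntoImage (n : WithTop ℕ∞) (f : E → F) (U : Set E) : Prop where
  isOpen : IsOpen U
  contDiffOn : ContDiffOn ℝ n f U
  isOpen_image : IsOpen (f '' U)
  exists_leftInvOn : ∃ finv : F → E, ContDiffOn ℝ n finv (f '' U) ∧ LeftInvOn finv f U

namespace IsDiffeoOntoImage

theorem injOn (hf : IsDiffeoOntoImage n f U) : InjOn f U :=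
  let ⟨_, _, hleft⟩ := hf.exists_leftInvOn
  hleft.injOn

theorem contDiffAt (hf : IsDiffeoOntoImage n f U) {x : E} (hx : x ∈ U) : ContDiffAt ℝ n f x :=
  hf.contDiffOn.contDiffAt (hf.isOpen.mem_nhds hx)

theorem isOpen_image_of_subset (hf : IsDiffeoOntoImage n f U) {V : Set E} (hV : IsOpen V)
    (hVU : V ⊆ U) : IsOpen (f '' V) := by
  obtain ⟨finv, hinv, hleft⟩ := hf.exists_leftInvOn
  rw [← inter_eq_self_of_subset_left hVU, hleft.image_inter, inter_comm,
    inter_eq_self_of_subset_left hVU]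
  exact hinv.continuousOn.isOpen_inter_preimage hf.isOpen_image hV

theorem isInvertible_fderiv (hf : IsDiffeoOntoImage n f U) (hn : n ≠ 0) {x : E} (hx : x ∈ U) :
    (fderiv ℝ f x).IsInvertible := by
  obtain ⟨finv, hinv, hleft⟩ := hf.exists_leftInvOn
  have hfx : f '' U ∈ 𝓝 (f x) := hf.isOpen_image.mem_nhds (mem_image_of_mem f hx)
  have hDf : HasFDerivAt f (fderiv ℝ f x) x := ((hf.contDiffAt hx).differentiableAt hn).hasFDerivAt
  have hDinv : HasFDerivAt finv (fderiv ℝ finv (f x)) (f x) :=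
    ((hinv.contDiffAt hfx).differentiableAt hn).hasFDerivAt
  have hDf' : HasFDerivAt f (fderiv ℝ f x) (finv (f x)) := by rwa [hleft hx]
  refine .of_inverse (g := fderiv ℝ finv (f x)) ?_ ?_
  · refine (hDf'.comp (f x) hDinv).unique ((hasFDerivAt_id _).congr_of_eventuallyEq ?_)
    filter_upwards [hfx] with _ ⟨y, hy, hyx⟩
    rw [← hyx, comp_apply, hleft hy, id]
  · refine (hDinv.comp x hDf).unique ((hasFDerivAt_id _).congr_of_eventuallyEq ?_)
    filter_upwards [hf.isOpen.mem_nhds hx] with y hy using hleft hy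

/-- The global form of the inverse function theorem. -/
theorem of_injOn_of_isInvertible_fderiv [CompleteSpace E] (hn : n ≠ 0) (hU : IsOpen U)
    (hf : ContDiffOn ℝ n f U) (hinj : InjOn f U)
    (hDf : ∀ x ∈ U, (fderiv ℝ f x).IsInvertible) : IsDiffeoOntoImage n f U := by
  have hleft : LeftInvOn (invFunOn f U) f U := hinj.leftInvOn_invFunOn
  have hfx : ∀ x ∈ U, ContDiffAt ℝ n f x := fun x hx => hf.contDiffAt (hU.mem_nhds hx)
  have hequiv : ∀ x ∈ U, ∃ e : E ≃L[ℝ] F, HasFDerivAt f (e : E →L[ℝ] F) x := fun x hx => by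
    obtain ⟨e, he⟩ := hDf x hx
    exact ⟨e, he ▸ ((hfx x hx).differentiableAt hn).hasFDerivAt⟩
  refine ⟨hU, hf, isOpen_iff_mem_nhds.2 ?_, invFunOn f U, ?_, hleft⟩
  · rintro _ ⟨x, hx, rfl⟩
    obtain ⟨e, he⟩ := hequiv x hx
    rw [← ((hfx x hx).hasStrictFDerivAt' he hn).map_nhds_eq_of_equiv]
    exact Filter.image_mem_map (hU.mem_nhds hx)
  · rintro _ ⟨x, hx, rfl⟩
    obtain ⟨e, he⟩ := hequiv x hx
    have hstrict := (hfx x hx).hasStrictFDerivAt' he hn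
    refine (((hfx x hx).to_localInverse he hn).congr_of_eventuallyEq ?_).contDiffWithinAt
    filter_upwards [hstrict.eventually_right_inverse,
      hstrict.localInverse_tendsto (hU.mem_nhds hx)] with y hy hyU
    exact (congrArg (invFunOn f U) hy).symm.trans (hleft hyU)

theorem exists_dist_le_mul_dist_image [LocallyCompactSpace E] (hf : IsDiffeoOntoImage n f U)
    (hn : n ≠ 0) (hK : IsCompact K) (hKU : K ⊆ U) :
    ∃ C : ℝ≥0, ∃ ε > 0, ∀ x ∈ K, ∀ y ∈ U, dist (f x) (f y) < ε →
      dist x y ≤ C * dist (f x) (f y) := by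
  obtain ⟨finv, hinv, hleft⟩ := hf.exists_leftInvOn
  obtain ⟨L, hL, hKL, hLU⟩ := exists_compact_between hK hf.isOpen hKU
  have himage : ∀ {S : Set E}, IsCompact S → S ⊆ U → IsCompact (f '' S) := fun hS hSU =>
    hS.image_of_continuousOn (hf.contDiffOn.continuousOn.mono hSU)
  have hlip : LocallyLipschitzOn (f '' L) finv := fun z hz => by
    have hz : ContDiffAt ℝ n finv z :=
      hinv.contDiffAt (hf.isOpen_image.mem_nhds (image_mono hLU hz))
    obtain ⟨C, t, ht, hC⟩ :=
      (hz.of_le (ENat.one_le_iff_ne_zero_withTop.2 hn)).exists_lipschitzOnWith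
    exact ⟨C, t, mem_nhdsWithin_of_mem_nhds ht, hC⟩
  obtain ⟨C, hC⟩ := hlip.exists_lipschitzOnWith_of_compact (himage hL hLU)
  obtain ⟨ε, hε, hthick⟩ := (himage hK hKU).exists_thickening_subset_open
    (hf.isOpen_image_of_subset isOpen_interior (interior_subset.trans hLU)) (image_mono hKL)
  refine ⟨C, ε, hε, fun x hx y hy hxy => ?_⟩
  have hfx : f x ∈ f '' L := mem_image_of_mem f (interior_subset (hKL hx))
  have hfy : f y ∈ f '' L := image_mono interior_subset <| hthick <|
    mem_thickening_iff.2 ⟨f x, mem_image_of_mem f hx, by rwa [dist_comm]⟩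
  simpa only [hleft (hKU hx), hleft hy] using hC.dist_le_mul _ hfx _ hfy

theorem exists_isInvertible_fderiv_add [CompleteSpace E] (hf : IsDiffeoOntoImage n f U)
    (hn : n ≠ 0) (hK : IsCompact K) (hKU : K ⊆ U) :
    ∃ ε > 0, ∀ x ∈ K, ∀ T : E →L[ℝ] F, ‖T‖ < ε → (fderiv ℝ f x + T).IsInvertible := by
  have hcont : ContinuousOn (fderiv ℝ f) K := fun x hx =>
    ((hf.contDiffAt (hKU hx)).continuousAt_fderiv hn).continuousWithinAt
  obtain ⟨ε, hε, hthick⟩ := (hK.image_of_continuousOn hcont).exists_thickening_subset_open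
    ContinuousLinearEquiv.isOpen
    (image_subset_iff.2 fun x hx => hf.isInvertible_fderiv hn (hKU hx))
  refine ⟨ε, hε, fun x hx T hT => hthick ?_⟩
  exact mem_thickening_iff.2 ⟨fderiv ℝ f x, mem_image_of_mem _ hx, by simpa using hT⟩

theorem exists_forall_injOn_add [LocallyCompactSpace E] (hf : IsDiffeoOntoImage n f U)
    (hn : n ≠ 0) (hK : IsCompact K) (hKU : K ⊆ U) :
    ∃ τ > 0, ∀ P : E → F, Differentiable ℝ P → support P ⊆ K → (∀ x, ‖P x‖ < τ) →
      (∀ x, ‖fderiv ℝ P x‖ < τ) → InjOn (f + P) U := by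
  obtain ⟨C, ε, hε, hC⟩ := hf.exists_dist_le_mul_dist_image hn hK hKU
  refine ⟨min (ε / 2) (C + 1)⁻¹, by positivity, fun P hP hPK hPsmall hDP => ?_⟩
  have hlip : ∀ x y, dist (P x) (P y) ≤ (C + 1 : ℝ)⁻¹ * dist x y :=
    (lipschitzWith_of_nnnorm_fderiv_le (C := (C + 1)⁻¹) hP fun x => by
      exact_mod_cast ((hDP x).trans_le (min_le_right _ _)).le).dist_le_mul
  have heq_of_mem : ∀ x ∈ K, ∀ y ∈ U, (f + P) x = (f + P) y → x = y := by
    intro x hx y hy hxy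
    have hdist : dist (f x) (f y) = dist (P x) (P y) := by
      rw [dist_comm (P x), dist_eq_norm, dist_eq_norm,
        sub_eq_sub_iff_add_eq_add.2 (hxy.trans (add_comm _ _))]
    have hclose : dist (f x) (f y) < ε := by
      linarith [dist_le_norm_add_norm (P x) (P y), (hPsmall x).trans_le (min_le_left _ _),
        (hPsmall y).trans_le (min_le_left _ _)]
    have hupper : dist x y ≤ C * dist (P x) (P y) := hdist ▸ hC x hx y hy hclose
    have hlower : (C + 1) * dist (P x) (P y) ≤ dist x y :=
      (le_inv_mul_iff₀ (by positivity)).1 (hlip x y)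
    have hP0 : dist (P x) (P y) = 0 := le_antisymm (by linarith) dist_nonneg
    exact dist_le_zero.1 (by simpa only [hP0, mul_zero] using hupper)
  intro x hx y hy hxy
  by_cases hxK : x ∈ K
  · exact heq_of_mem x hxK y hy hxy
  by_cases hyK : y ∈ K
  · exact (heq_of_mem y hyK x hx hxy.symm).symm
  have hP0 : ∀ z ∉ K, P z = 0 := fun z hz => notMem_support.1 fun h => hz (hPK h)
  exact hf.injOn hx hy (by simpa [hP0 x hxK, hP0 y hyK] using hxy)

theorem exists_forall_add [FiniteDimensional ℝ E] (hf : IsDiffeoOntoImage n f U)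
    (hn : n ≠ 0) (hK : IsCompact K) (hKU : K ⊆ U) :
    ∃ τ > 0, ∀ P : E → F, ContDiff ℝ n P → tsupport P ⊆ K → (∀ x, ‖P x‖ < τ) →
      (∀ x, ‖fderiv ℝ P x‖ < τ) → IsDiffeoOntoImage n (f + P) U := by
  obtain ⟨τ₁, hτ₁, hinj⟩ := hf.exists_forall_injOn_add hn hK hKU
  obtain ⟨τ₂, hτ₂, hinv⟩ := hf.exists_isInvertible_fderiv_add hn hK hKU
  refine ⟨min τ₁ τ₂, lt_min hτ₁ hτ₂, fun P hP hPK hPsmall hDP => ?_⟩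
  have hPd : Differentiable ℝ P := hP.differentiable hn
  refine of_injOn_of_isInvertible_fderiv hn hf.isOpen (hf.contDiffOn.add hP.contDiffOn)
    (hinj P hPd ((subset_tsupport P).trans hPK) (fun x => (hPsmall x).trans_le (min_le_left _ _))
      fun x => (hDP x).trans_le (min_le_left _ _)) fun x hx => ?_
  rw [fderiv_add ((hf.contDiffAt hx).differentiableAt hn) (hPd x)]
  by_cases hxP : x ∈ tsupport P
  · exact hinv x (hPK hxP) _ ((hDP x).trans_le (min_le_right _ _))
  · rw [fderiv_of_notMem_tsupport ℝ hxP, add_zero]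
    exact hf.isInvertible_fderiv hn hx

end IsDiffeoOntoImage

end Diffeomorphism

section Cutoff

open MeasureTheory Measure

variable {E F : Type*} [NormedAddCommGroup E] [NormedSpace ℝ E] [FiniteDimensional ℝ E]
  [NormedAddCommGroup F] [NormedSpace ℝ F]

/-- Mollification at scale `ε`: the last clause says that `v x` averages the values of `u` on
`ball x ε`. -/
theorem exists_contDiff_lipschitzWith_mollification [CompleteSpace F] {u : E → F} {C : ℝ≥0}
    (hu : LipschitzWith C u) {ε : ℝ} (hε : 0 < ε) :
    ∃ v : E → F, ContDiff ℝ ∞ v ∧ LipschitzWith C v ∧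
      ∀ x c R, MapsTo u (ball x ε) (closedBall c R) → v x ∈ closedBall c R := by
  borelize E
  let ψ : ContDiffBump (0 : E) := ⟨ε / 2, ε, half_pos hε, half_lt_self hε⟩
  let μ : Measure E := addHaar
  have hψ : HasCompactSupport (ψ.normed μ) := ψ.hasCompactSupport_normed
  have hψint : ∫ t, ψ.normed μ t ∂μ = 1 := ψ.integral_normed
  have hint : ∀ x, Integrable (fun t => ψ.normed μ t • u (x - t)) μ := fun x =>
    Continuous.integrable_of_hasCompactSupport
      (ψ.continuous_normed.smul (hu.continuous.comp (by fun_prop))) hψ.smul_right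
  refine ⟨convolution (ψ.normed μ) u (.lsmul ℝ ℝ) μ,
    hψ.contDiff_convolution_left _ ψ.contDiff_normed hu.continuous.locallyIntegrable,
    .of_dist_le_mul fun x y => ?_, fun x c R hxR => ?_⟩
  · rw [convolution_lsmul, convolution_lsmul, dist_eq_norm, ← integral_sub (hint x) (hint y)]
    calc ‖∫ t, (ψ.normed μ t • u (x - t) - ψ.normed μ t • u (y - t)) ∂μ‖
        ≤ ∫ t, ψ.normed μ t * (C * dist x y) ∂μ := by
          refine norm_integral_le_of_norm_le
            ((ψ.continuous_normed.integrable_of_hasCompactSupport hψ).mul_const _) (.of_forall ?_)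
          intro t
          rw [← smul_sub, norm_smul, Real.norm_of_nonneg (ψ.nonneg_normed t), ← dist_eq_norm]
          refine mul_le_mul_of_nonneg_left ?_ (ψ.nonneg_normed t)
          simpa using hu.dist_le_mul (x - t) (y - t)
      _ = C * dist x y := by rw [integral_mul_const, hψint, one_mul]
  · have hR : 0 ≤ R := dist_nonneg.trans (hxR (mem_ball_self hε))
    exact dist_convolution_le hR ψ.support_normed_eq.subset (fun t => ψ.nonneg_normed t) hψint
      hu.continuous.aestronglyMeasurable hxR

theorem exists_contDiff_cutoff (Q : Set E) {r : ℝ} (hr : 0 < r) :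
    ∃ φ : E → ℝ, ContDiff ℝ ∞ φ ∧ (∀ x, ‖φ x‖ ≤ 1) ∧ EqOn φ 1 Q ∧
      support φ ⊆ thickening r Q ∧ ∀ x, ‖fderiv ℝ φ x‖ ≤ 3 / r := by
  have hr3 : 0 < r / 3 := by positivity
  let u : E → ℝ := fun x => thickenedIndicator hr3 (cthickening (r / 3) Q) x
  have hu : LipschitzWith (r / 3).toNNReal⁻¹ u := lipschitzWith_thickenedIndicator _ _
  have hu_norm : ∀ x, ‖u x‖ ≤ 1 := fun x => by
    simpa [u] using thickenedIndicator_le_one hr3 (cthickening (r / 3) Q) x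
  have hu_one : ∀ x ∈ cthickening (r / 3) Q, u x = 1 := fun x hx => by
    simp only [u, thickenedIndicator_one hr3 _ hx, NNReal.coe_one]
  have hu_zero : ∀ x ∉ thickening (r / 3 + r / 3) Q, u x = 0 := fun x hx => by
    have hx' := fun h => hx (thickening_cthickening_subset _ hr3.le Q h)
    simp only [u, thickenedIndicator_zero hr3 _ hx', NNReal.coe_zero]
  obtain ⟨φ, hφ, hφ_lip, hφ_avg⟩ := exists_contDiff_lipschitzWith_mollification hu hr3
  have hφ_eq : ∀ x c, (∀ y ∈ ball x (r / 3), u y = c) → φ x = c := fun x c h => by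
    simpa using hφ_avg x c 0 fun y hy => by simp [h y hy]
  refine ⟨φ, hφ, fun x => ?_, fun x hx => ?_, fun x hx => ?_, fun x => ?_⟩
  · simpa using hφ_avg x 0 1 fun y _ => by simpa using hu_norm y
  · exact hφ_eq x 1 fun y hy =>
      hu_one y (closedBall_subset_cthickening hx _ (ball_subset_closedBall hy))
  · by_contra hxr
    refine hx (hφ_eq x 0 fun y hy => hu_zero y fun hyQ => hxr ?_)
    convert thickening_thickening_subset (r / 3) (r / 3 + r / 3) Q
      (mem_thickening_iff.2 ⟨y, hyQ, mem_ball'.1 hy⟩) using 2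
    ring
  · calc ‖fderiv ℝ φ x‖ ≤ ((r / 3).toNNReal⁻¹ : ℝ≥0) := norm_fderiv_le_of_lipschitz ℝ hφ_lip
      _ = 3 / r := by rw [NNReal.coe_inv, Real.coe_toNNReal _ hr3.le, inv_div]

end Cutoff

section Correction

variable {E F : Type*} [NormedAddCommGroup E] [NormedSpace ℝ E] [NormedAddCommGroup F]
  [NormedSpace ℝ F]

theorem contDiff_smul_of_forall_mem_tsupport {n : WithTop ℕ∞} {φ : E → ℝ} {h : E → F}
    (hφ : ContDiff ℝ n φ) (hh : ∀ x ∈ tsupport φ, ContDiffAt ℝ n h x) : ContDiff ℝ n (φ • h) :=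
  contMDiff_iff_contDiff.1 <| contMDiff_of_tsupport fun x hx =>
    contMDiffAt_iff_contDiffAt.2 <| hφ.contDiffAt.smul (hh x (tsupport_smul_subset_left φ h hx))

theorem norm_fderiv_smul_le_of_forall_mem_tsupport {φ : E → ℝ} {h : E → F} {a a' b b' : ℝ}
    (hφ : Differentiable ℝ φ) (hh : ∀ x ∈ tsupport φ, DifferentiableAt ℝ h x)
    (hb₀ : 0 ≤ b) (hb₀' : 0 ≤ b') (ha : ∀ x, ‖φ x‖ ≤ a) (ha' : ∀ x, ‖fderiv ℝ φ x‖ ≤ a')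
    (hb : ∀ x ∈ tsupport φ, ‖h x‖ ≤ b) (hb' : ∀ x ∈ tsupport φ, ‖fderiv ℝ h x‖ ≤ b') (x : E) :
    ‖fderiv ℝ (φ • h) x‖ ≤ a * b' + a' * b := by
  have ha₀ : 0 ≤ a := (norm_nonneg _).trans (ha x)
  have ha₀' : 0 ≤ a' := (norm_nonneg _).trans (ha' x)
  by_cases hx : x ∈ tsupport φ
  · calc ‖fderiv ℝ (φ • h) x‖ = ‖φ x • fderiv ℝ h x + (fderiv ℝ φ x).smulRight (h x)‖ := by
          rw [fderiv_smul (hφ x) (hh x hx)]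
      _ ≤ ‖φ x‖ * ‖fderiv ℝ h x‖ + ‖fderiv ℝ φ x‖ * ‖h x‖ := by
          rw [← norm_smul, ← ContinuousLinearMap.norm_smulRight_apply]
          exact norm_add_le _ _
      _ ≤ a * b' + a' * b := by
          gcongr
          exacts [ha x, hb' x hx, ha' x, hb x hx]
  · have hx' : x ∉ tsupport (φ • h) := fun hx' => hx (tsupport_smul_subset_left φ h hx')
    rw [fderiv_of_notMem_tsupport ℝ hx', norm_zero]
    positivity

theorem norm_affine_sub_le_of_norm_fderiv_sub_le {f : E → F} {A : E →L[ℝ] F} {x₀ x : E} {R ε : ℝ}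
    (hf : ∀ x ∈ closedBall x₀ R, DifferentiableAt ℝ f x)
    (hA : ∀ x ∈ closedBall x₀ R, ‖fderiv ℝ f x - A‖ ≤ ε) (hx : x ∈ closedBall x₀ R) :
    ‖A x + (f x₀ - A x₀) - f x‖ ≤ ε * R := by
  have hx₀ : x₀ ∈ closedBall x₀ R := mem_closedBall_self (dist_nonneg.trans hx)
  have hε : 0 ≤ ε := (norm_nonneg _).trans (hA x₀ hx₀)
  calc ‖A x + (f x₀ - A x₀) - f x‖ = ‖f x - f x₀ - A (x - x₀)‖ := by
        rw [← norm_neg, map_sub]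
        congr 1
        abel
    _ ≤ ε * ‖x - x₀‖ :=
        Convex.norm_image_sub_le_of_norm_fderiv_le' hf hA (convex_closedBall x₀ R) hx₀ hx
    _ ≤ ε * R := by
        gcongr
        exact mem_closedBall_iff_norm.1 hx

theorem exists_forall_mem_ball_dist_lt_of_isCompact {X Y : Type*} [PseudoMetricSpace X]
    [PseudoMetricSpace Y] {f : X → Y} {K : Set X} (hK : IsCompact K)
    (hf : ∀ x ∈ K, ContinuousAt f x) {ε : ℝ} (hε : 0 < ε) :
    ∃ ρ > 0, ∀ x₀ ∈ K, ∀ x ∈ ball x₀ ρ, dist (f x) (f x₀) < ε := by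
  obtain ⟨ρ, hρ, hunif⟩ := mem_uniformity_dist.1 <|
    hK.uniformContinuousAt_of_continuousAt f hf (dist_mem_uniformity hε)
  exact ⟨ρ, hρ, fun x₀ hx₀ x hx => dist_comm (f x₀) (f x) ▸ hunif (mem_ball'.1 hx) hx₀⟩

theorem exists_contDiff_affine_correction [FiniteDimensional ℝ E] {n : ℕ∞} (hn : n ≠ 0) {f : E → F}
    {A : E →L[ℝ] F} {Q : Set E} {x₀ : E} {δ r ε : ℝ} (hr : 0 < r) (hrδ : r ≤ δ)
    (hQ : Q ⊆ closedBall x₀ δ) (hf : ∀ x ∈ closedBall x₀ (2 * δ), ContDiffAt ℝ n f x)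
    (hA : ∀ x ∈ closedBall x₀ (2 * δ), ‖fderiv ℝ f x - A‖ ≤ ε) :
    ∃ P : E → F, ContDiff ℝ n P ∧ tsupport P ⊆ closedBall x₀ (2 * δ) ∧
      support P ⊆ thickening r Q ∧ (∀ z ∈ Q, f z + P z = A z + (f x₀ - A x₀)) ∧
      (∀ x, ‖P x‖ ≤ 2 * δ * ε) ∧ ∀ x, ‖fderiv ℝ P x‖ ≤ (1 + 6 * δ / r) * ε := by
  set B := closedBall x₀ (2 * δ)
  set h : E → F := fun x => A x + (f x₀ - A x₀) - f x with hh_def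
  have hδ : 0 < δ := hr.trans_le hrδ
  have hε : 0 ≤ ε := (norm_nonneg _).trans (hA x₀ (mem_closedBall_self (by positivity)))
  have hfd : ∀ x ∈ B, DifferentiableAt ℝ f x := fun x hx =>
    (hf x hx).differentiableAt (by exact_mod_cast hn)
  have hh : ∀ x ∈ B, ‖h x‖ ≤ ε * (2 * δ) := fun x hx =>
    norm_affine_sub_le_of_norm_fderiv_sub_le hfd hA hx
  have hhD : ∀ x ∈ B, HasFDerivAt h (A - fderiv ℝ f x) x := fun x hx =>
    (A.hasFDerivAt.add_const _).sub (hfd x hx).hasFDerivAt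
  obtain ⟨φ, hφ, hφ_norm, hφ_one, hφ_supp, hDφ⟩ := exists_contDiff_cutoff Q hr
  have hφB : tsupport φ ⊆ B := closure_minimal (fun x hx => by
    obtain ⟨q, hq, hxq⟩ := mem_thickening_iff.1 (hφ_supp hx)
    have hq' : dist q x₀ ≤ δ := hQ hq
    exact mem_closedBall.2 (by linarith [dist_triangle x q x₀])) isClosed_closedBall
  refine ⟨φ • h, ?_, (tsupport_smul_subset_left φ h).trans hφB,
    (support_smul_subset_left φ h).trans hφ_supp, fun z hz => ?_, fun x => ?_, fun x => ?_⟩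
  · exact contDiff_smul_of_forall_mem_tsupport (hφ.of_le (by exact_mod_cast le_top)) fun x hx =>
      (A.contDiff.contDiffAt.add contDiffAt_const).sub (hf x (hφB hx))
  · simp [hφ_one hz, hh_def]
  · by_cases hx : φ x = 0
    · rw [Pi.smul_apply', hx, zero_smul, norm_zero]
      positivity
    · calc ‖(φ • h) x‖ = ‖φ x‖ * ‖h x‖ := norm_smul _ _
        _ ≤ 1 * (ε * (2 * δ)) := by
          gcongr
          exacts [hφ_norm x, hh x (hφB (subset_tsupport φ hx))]
        _ = 2 * δ * ε := by ring
  · calc ‖fderiv ℝ (φ • h) x‖ ≤ 1 * ε + 3 / r * (ε * (2 * δ)) := by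
          refine norm_fderiv_smul_le_of_forall_mem_tsupport (hφ.differentiable (by simp))
            (fun x hx => (hhD x (hφB hx)).differentiableAt) (by positivity) hε hφ_norm hDφ
            (fun x hx => hh x (hφB hx)) (fun x hx => ?_) x
          rw [(hhD x (hφB hx)).fderiv, norm_sub_rev]
          exact hA x (hφB hx)
      _ = (1 + 6 * δ / r) * ε := by ring

theorem exists_forall_affine_correction [FiniteDimensional ℝ E] {n : ℕ∞} (hn : n ≠ 0) {f : E → F}
    {K : Set E} (hK : IsCompact K) {R σ χ : ℝ} (hR : 0 < R)
    (hf : ∀ x ∈ cthickening R K, ContDiffAt ℝ n f x) (hσ : 0 < σ) (hχ : 0 < χ) :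
    ∃ ρ > 0, ∃ η > 0, ∀ Q ⊆ K, 0 < diam Q → diam Q < ρ →
      ∀ A : E →L[ℝ] F, ∀ x₀ ∈ Q, ‖A - fderiv ℝ f x₀‖ < η →
        ∃ P : E → F, ContDiff ℝ n P ∧ tsupport P ⊆ cthickening R K ∧
          support P ⊆ thickening (χ * diam Q) Q ∧ (∀ z ∈ Q, f z + P z = A z + (f x₀ - A x₀)) ∧
          (∀ x, ‖P x‖ ≤ σ) ∧ ∀ x, ‖fderiv ℝ P x‖ ≤ σ := by
  set χ₁ := min χ 1
  have hχ₁ : 0 < χ₁ := lt_min hχ one_pos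
  set η := σ / (2 * (1 + 6 / χ₁)) with hη_def
  have hη : 0 < η := by positivity
  have hησ : (1 + 6 / χ₁) * (2 * η) = σ := by rw [hη_def]; field_simp
  obtain ⟨ρ, hρ, hDf⟩ := exists_forall_mem_ball_dist_lt_of_isCompact hK (fun x hx =>
    (hf x (self_subset_cthickening K hx)).continuousAt_fderiv (by exact_mod_cast hn)) hη
  refine ⟨min 1 (min R ρ) / 2, by positivity, η, hη, fun Q hQK hδ hδρ A x₀ hx₀ hA => ?_⟩
  set δ := diam Q
  obtain ⟨hδ1, hδR, hδρ⟩ : 2 * δ < 1 ∧ 2 * δ < R ∧ 2 * δ < ρ := by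
    simpa only [lt_min_iff] using (lt_div_iff₀' two_pos).1 hδρ
  have hB : closedBall x₀ (2 * δ) ⊆ cthickening R K :=
    (closedBall_subset_closedBall hδR.le).trans (closedBall_subset_cthickening (hQK hx₀) R)
  have hDfA : ∀ x ∈ closedBall x₀ (2 * δ), ‖fderiv ℝ f x - A‖ ≤ 2 * η := fun x hx => by
    have hx' := hDf x₀ (hQK hx₀) x (closedBall_subset_ball hδρ hx)
    rw [dist_eq_norm] at hx'
    rw [norm_sub_rev] at hA
    linarith [norm_sub_le_norm_sub_add_norm_sub (fderiv ℝ f x) (fderiv ℝ f x₀) A]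
  obtain ⟨P, hP, hPB, hPQ, hPA, hP_norm, hDP⟩ := exists_contDiff_affine_correction hn
    (mul_pos hχ₁ hδ) (mul_le_of_le_one_left hδ.le (min_le_right _ _))
    (fun q hq => dist_le_diam_of_mem (hK.isBounded.subset hQK) hq hx₀)
    (fun x hx => hf x (hB hx)) hDfA
  refine ⟨P, hP, hPB.trans hB, hPQ.trans (thickening_mono ?_ Q), hPA, fun x => ?_, fun x => ?_⟩
  · exact mul_le_mul_of_nonneg_right (min_le_left _ _) hδ.le
  · refine (hP_norm x).trans (hησ ▸ ?_)
    gcongr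
    linarith [div_pos (by norm_num : (0 : ℝ) < 6) hχ₁]
  · rw [← hησ, ← mul_div_mul_right 6 χ₁ hδ.ne']
    exact hDP x

end Correction

theorem local_linearization_to_affine_map_general {E F : Type*} [NormedAddCommGroup E]
    [NormedSpace ℝ E] [FiniteDimensional ℝ E] [NormedAddCommGroup F] [NormedSpace ℝ F] {n : ℕ∞}
    (hn : n ≠ 0) {f : E → F} {U K : Set E} (hf : IsDiffeoOntoImage n f U) (hK : IsCompact K)
    (hKU : K ⊆ U) {θ χ : ℝ} (hθ : 0 < θ) (hχ : 0 < χ) :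
    ∃ ρ > 0, ∃ η > 0, ∀ Q ⊆ K, 0 < diam Q → diam Q < ρ →
      ∀ A : E →L[ℝ] F, ∀ x₀ ∈ Q, ‖A - fderiv ℝ f x₀‖ < η →
        ∃ b : F, ∃ g : E → F, IsDiffeoOntoImage n g U ∧
          (∀ x, χ * diam Q ≤ infDist x Q → g x = f x) ∧ (∀ z ∈ Q, g z = A z + b) ∧
          ∀ x ∈ U, ‖fderiv ℝ g x - fderiv ℝ f x‖ ≤ θ := by
  have hn' : (n : WithTop ℕ∞) ≠ 0 := by exact_mod_cast hn
  obtain ⟨R, hR, hK'U⟩ := hK.exists_cthickening_subset_open hf.isOpen hKU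
  obtain ⟨τ, hτ, hstable⟩ := hf.exists_forall_add hn' hK.cthickening hK'U
  obtain ⟨ρ, hρ, η, hη, hcorr⟩ := exists_forall_affine_correction hn hK hR
    (fun x hx => hf.contDiffAt (hK'U hx)) (lt_min hθ (half_pos hτ)) hχ
  refine ⟨ρ, hρ, η, hη, fun Q hQK hδ hδρ A x₀ hx₀ hA => ?_⟩
  obtain ⟨P, hP, hPK, hPQ, hPA, hP_norm, hDP⟩ := hcorr Q hQK hδ hδρ A x₀ hx₀ hA
  have hστ : min θ (τ / 2) < τ := (min_le_right _ _).trans_lt (half_lt_self hτ)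
  refine ⟨f x₀ - A x₀, f + P, hstable P hP hPK (fun x => (hP_norm x).trans_lt hστ)
    (fun x => (hDP x).trans_lt hστ), fun x hx => ?_, hPA, fun x hx => ?_⟩
  · have hx' : x ∉ thickening (χ * diam Q) Q := fun h =>
      ((mem_thickening_iff_infDist_lt ⟨x₀, hx₀⟩).1 h).not_ge hx
    rw [Pi.add_apply, notMem_support.1 fun h => hx' (hPQ h), add_zero]
  · rw [fderiv_add ((hf.contDiffAt hx).differentiableAt hn') (hP.differentiable hn' x),
      add_sub_cancel_left]
    exact (hDP x).trans (min_le_left _ _)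

/-- **Corollary of the local linearization lemma.**  Given a `C^∞` diffeomorphism onto its
image `f : B(0,2) → ℝ^d` and `θ, χ′ > 0`, there are `ρ, η > 0` such that: for every compact
`Q ⊆ B(0,1)` homeomorphic to the closed unit ball with `0 < diam Q < ρ`, and every invertible
linear map `A` with `‖A − Df(x₀)‖ < η` for some `x₀ ∈ Q`, there is a `C^∞` diffeomorphism
onto its image `g : B(0,2) → ℝ^d` coinciding with `f` at distance `≥ χ′·diam Q` from `Q`,
equal to the affine map `z ↦ A z + b` on `Q`, with `‖Dg − Df‖ ≤ θ` on `B(0,2)`. -/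
theorem local_linearization_to_affine_map
    (d : ℕ) (hd : 1 ≤ d)
    (f : EuclideanSpace ℝ (Fin d) → EuclideanSpace ℝ (Fin d))
    (hf : ContDiffOn ℝ (⊤ : ℕ∞) f (ball (0 : EuclideanSpace ℝ (Fin d)) 2))
    (hfinj : Set.InjOn f (ball (0 : EuclideanSpace ℝ (Fin d)) 2))
    (hfopen : IsOpen (f '' ball (0 : EuclideanSpace ℝ (Fin d)) 2))
    (hfinv : ∃ finv, ContDiffOn ℝ (⊤ : ℕ∞) finv (f '' ball (0 : EuclideanSpace ℝ (Fin d)) 2) ∧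
      ∀ x ∈ ball (0 : EuclideanSpace ℝ (Fin d)) 2, finv (f x) = x)
    (θ χ' : ℝ) (hθ : 0 < θ) (hχ' : 0 < χ') :
    ∃ ρ η : ℝ, 0 < ρ ∧ 0 < η ∧
      ∀ Q : Set (EuclideanSpace ℝ (Fin d)),
        IsCompact Q → Q ⊆ ball (0 : EuclideanSpace ℝ (Fin d)) 1 →
        Nonempty (Q ≃ₜ (closedBall (0 : EuclideanSpace ℝ (Fin d)) 1 :
          Set (EuclideanSpace ℝ (Fin d)))) →
        0 < Metric.diam Q → Metric.diam Q < ρ →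
        ∀ A : EuclideanSpace ℝ (Fin d) →L[ℝ] EuclideanSpace ℝ (Fin d),
          Function.Bijective A →
          ∀ x₀ ∈ Q, ‖A - fderiv ℝ f x₀‖ < η →
          ∃ b : EuclideanSpace ℝ (Fin d),
          ∃ g : EuclideanSpace ℝ (Fin d) → EuclideanSpace ℝ (Fin d),
            ContDiffOn ℝ (⊤ : ℕ∞) g (ball (0 : EuclideanSpace ℝ (Fin d)) 2) ∧
            Set.InjOn g (ball (0 : EuclideanSpace ℝ (Fin d)) 2) ∧
            IsOpen (g '' ball (0 : EuclideanSpace ℝ (Fin d)) 2) ∧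
            (∃ ginv, ContDiffOn ℝ (⊤ : ℕ∞) ginv (g '' ball (0 : EuclideanSpace ℝ (Fin d)) 2) ∧
              ∀ x ∈ ball (0 : EuclideanSpace ℝ (Fin d)) 2, ginv (g x) = x) ∧
            (∀ x ∈ ball (0 : EuclideanSpace ℝ (Fin d)) 2,
              χ' * Metric.diam Q ≤ infDist x Q → g x = f x) ∧
            (∀ z ∈ Q, g z = A z + b) ∧
            (∀ x ∈ ball (0 : EuclideanSpace ℝ (Fin d)) 2,
              ‖fderiv ℝ g x - fderiv ℝ f x‖ ≤ θ) := by
  obtain ⟨ρ, hρ, η, hη, hlin⟩ := local_linearization_to_affine_map_general (by simp)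
    ⟨isOpen_ball, hf, hfopen, hfinv⟩ (isCompact_closedBall 0 1) (closedBall_subset_ball one_lt_two)
    hθ hχ'
  refine ⟨ρ, η, hρ, hη, fun Q _ hQ _ hδ hδρ A _ x₀ hx₀ hA => ?_⟩
  obtain ⟨b, g, hg, hgf, hgA, hDg⟩ :=
    hlin Q (hQ.trans ball_subset_closedBall) hδ hδρ A x₀ hx₀ hA
  exact ⟨b, g, hg.contDiffOn, hg.injOn, hg.isOpen_image, hg.exists_leftInvOn, fun x _ => hgf x, hgA,
    hDg⟩
end
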